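/- Assume 1 < Y < 8/5 and fix ζ > 1. As h → 0 with ε = ε(h) satisfying ε(h)·h^{−4/(8+Y)} → ∞ and ε(h)·h^{−1/(4−Y)} → 0, one has Cov( X_h²·1_{|X_h| ≤ ε}, X_h²·1_{|X_h| ≤ ζε} ) = 2σ⁴h² + ((C₊+C₋)/(4−Y))·h·ε^{4−Y} + o(h·ε^{4−Y}). -/

import Mathlib

open MeasureTheory ProbabilityTheory Filter Asymptotics Set
open scoped Topology NNReal ENNReal Real

noncomputable section

/-- The Lévy density `s(x) = (C₊·1_{x>0} + C₋·1_{x<0})·q(x)·|x|^{−1−Y}`. -/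
def levyDensity (Y Cp Cm : ℝ) (q : ℝ → ℝ) (x : ℝ) : ℝ :=
  (if 0 < x then Cp else if x < 0 then Cm else 0) * q x * |x| ^ (-1 - Y)

/-- The Lévy measure `ν(dx) = s(x) dx`. -/
def levyMeasure (Y Cp Cm : ℝ) (q : ℝ → ℝ) : Measure ℝ :=
  volume.withDensity fun x => ENNReal.ofReal (levyDensity Y Cp Cm q x)

/-- The Lévy exponent `ψ_J(u) = ibu + ∫ (e^{iux} − 1 − iux·1_{|x|≤1}) ν(dx)`. -/
def psiJ (b Y Cp Cm : ℝ) (q : ℝ → ℝ) (u : ℝ) : ℂ :=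
  Complex.I * b * u +
    ∫ x : ℝ,
      (Complex.exp (Complex.I * u * x) - 1 - (if |x| ≤ 1 then Complex.I * u * x else 0))
      ∂(levyMeasure Y Cp Cm q)

/-- The scale parameter `ς = ((C₊+C₋)Γ(−Y)|cos(πY/2)|)^{1/Y}`. -/
def varsigma (Y Cp Cm : ℝ) : ℝ :=
  ((Cp + Cm) * Real.Gamma (-Y) * |Real.cos (π * Y / 2)|) ^ (1 / Y)

/-- The stable part of the Lévy exponent:
`ς^Y |u|^Y (1 − iβ·sgn(u)·tan(πY/2))` with `β = (C₊−C₋)/(C₊+C₋)`. -/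
def stablePart (Y Cp Cm : ℝ) (u : ℝ) : ℂ :=
  (varsigma Y Cp Cm ^ Y * |u| ^ Y : ℝ) *
    (1 - Complex.I * ((Cp - Cm) / (Cp + Cm)) * Real.sign u * Real.tan (π * Y / 2))

/-- Characteristic function of `X̃_h`, the time-`h` marginal of a Brownian motion with
variance `σ²` plus an independent strictly `Y`-stable process. -/
def tildeCF (σ Y Cp Cm : ℝ) (h u : ℝ) : ℂ :=
  Complex.exp (-(σ ^ 2 * u ^ 2 * h / 2) - h * stablePart Y Cp Cm u)

/-!
Rescale by the threshold: `X_h / ε` has law `μ_h`, the convolution of the centred Gaussian `γ_h` of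
variance `v = σ² h / ε²` with a jump law whose characteristic function is the exponential of
`τ = h ε^{-Y}` times the exponent of a Lévy measure converging to the stable one, `ν₁`, up to drift.
For a Schwartz function `f`, Fourier inversion and `e^ψ ≈ 1 + ψ` show that `∫ f dμ_h - ∫ f dγ_h` is
the generator of the jump part applied to `f` at `0`, up to `o(τ)`; when `f` and `f'` vanish at `0`
this is `τ ∫ f dν₁`. Sandwiching `x^{2j} 1_{|x| ≤ a}` between smooth truncations of `x^{2j}` extends
this to truncated moments, and since `h = O(ε^r)` for some `r > 2`, truncation changes the Gaussian
moments only by `o(τ)`. Hence the truncated second moments are `v + O(τ)` and the fourth is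
`3 v² + τ (C₊ + C₋) / (4 - Y) + o(τ)`, and in the covariance the squares of `v` combine to `2 v²`.
-/

lemma norm_exp_sub_one_le {w : ℂ} (hw : w.re ≤ 0) : ‖Complex.exp w - 1‖ ≤ ‖w‖ := by
  have h := (convex_halfSpace_re_le 0).norm_image_sub_le_of_norm_hasDerivWithin_le (C := 1)
    (fun z _ => (Complex.hasDerivAt_exp z).hasDerivWithinAt)
    (fun z hz => by simpa [Complex.norm_exp] using hz) (x := 0) (by simp) hw
  simpa using h

lemma norm_exp_sub_one_sub_le {w : ℂ} (hw : w.re ≤ 0) :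
    ‖Complex.exp w - 1 - w‖ ≤ ‖w‖ ^ 2 := by
  have hconv : Convex ℝ ({z : ℂ | z.re ≤ 0} ∩ Metric.closedBall 0 ‖w‖) :=
    (convex_halfSpace_re_le 0).inter (convex_closedBall 0 _)
  have h := hconv.norm_image_sub_le_of_norm_hasDerivWithin_le (C := ‖w‖)
    (fun z _ => (((Complex.hasDerivAt_exp z).sub_const 1).sub (hasDerivAt_id z)).hasDerivWithinAt)
    (fun z hz => (norm_exp_sub_one_le hz.1).trans (mem_closedBall_zero_iff.mp hz.2))
    (x := 0) (by simp) ⟨hw, by simp⟩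
  simpa [sq] using h

lemma norm_mul_exp_sub_sub_le {z w : ℂ} (hz : ‖z‖ ≤ 1) (hw : w.re ≤ 0) :
    ‖z * Complex.exp w - z - w‖ ≤ ‖w‖ ^ 2 + ‖z - 1‖ * ‖w‖ :=
  calc ‖z * Complex.exp w - z - w‖ = ‖z * (Complex.exp w - 1 - w) + (z - 1) * w‖ := by
        congr 1; ring
    _ ≤ ‖z‖ * ‖Complex.exp w - 1 - w‖ + ‖z - 1‖ * ‖w‖ := by
        simpa only [norm_mul] using norm_add_le (z * (Complex.exp w - 1 - w)) ((z - 1) * w)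
    _ ≤ 1 * ‖w‖ ^ 2 + ‖z - 1‖ * ‖w‖ := by
        gcongr
        exact norm_exp_sub_one_sub_le hw
    _ = _ := by rw [one_mul]

lemma norm_exp_I_mul_sub_one_sub_le (u x : ℝ) :
    ‖Complex.exp (Complex.I * u * x) - 1 - Complex.I * u * x‖ ≤ (1 + u ^ 2) * min (x ^ 2) |x| := by
  set w : ℂ := Complex.I * u * x
  have hre : w.re ≤ 0 := by simp [w]
  have hnorm : ‖w‖ = |u| * |x| := by simp [w]
  have hquad : ‖Complex.exp w - 1 - w‖ ≤ (1 + u ^ 2) * x ^ 2 :=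
    calc ‖Complex.exp w - 1 - w‖ ≤ ‖w‖ ^ 2 := norm_exp_sub_one_sub_le hre
      _ = u ^ 2 * x ^ 2 := by rw [hnorm, mul_pow, sq_abs, sq_abs]
      _ ≤ (1 + u ^ 2) * x ^ 2 := by gcongr; linarith
  have hlin : ‖Complex.exp w - 1 - w‖ ≤ (1 + u ^ 2) * |x| :=
    calc ‖Complex.exp w - 1 - w‖ ≤ ‖w‖ + ‖w‖ :=
          (norm_sub_le _ _).trans (by gcongr; exact norm_exp_sub_one_le hre)
      _ = (2 * |u|) * |x| := by rw [hnorm]; ring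
      _ ≤ (1 + u ^ 2) * |x| := by gcongr; nlinarith [sq_nonneg (|u| - 1), sq_abs u]
  rw [mul_min_of_nonneg _ _ (by positivity)]
  exact le_min hquad hlin

open FourierTransform SchwartzMap

/-- The constant by which estimates of the Fourier integrand of `f` with growth `(1 + u²)²` in the
frequency `u = 2πξ` are multiplied. -/
def fourierMoment (f : 𝓢(ℝ, ℂ)) : ℝ := ∫ ξ, (1 + (2 * π * ξ) ^ 2) ^ 2 * ‖𝓕 f ξ‖

section Schwartz

variable (f : 𝓢(ℝ, ℂ))

lemma schwartz_integrable_weight_mul_norm_fourier :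
    Integrable fun ξ : ℝ => (1 + (2 * π * ξ) ^ 2) ^ 2 * ‖𝓕 f ξ‖ := by
  have hpow (k : ℕ) : Integrable fun ξ : ℝ => ‖ξ‖ ^ k * ‖𝓕 f ξ‖ :=
    (𝓕 f).integrable_pow_mul volume k
  refine (((hpow 0).add ((hpow 2).const_mul (2 * (2 * π) ^ 2))).add
    ((hpow 4).const_mul ((2 * π) ^ 4))).congr (.of_forall fun ξ => ?_)
  simp only [Pi.add_apply, Real.norm_eq_abs, sq_abs, (show Even 4 by decide).pow_abs]
  ring

lemma schwartz_integrable_fourier_mul {g : ℝ → ℂ} {C : ℝ} (hg : Measurable g)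
    (hbound : ∀ u, ‖g u‖ ≤ C * (1 + u ^ 2) ^ 2) :
    Integrable fun ξ => 𝓕 f ξ * g (2 * π * ξ) := by
  refine ((schwartz_integrable_weight_mul_norm_fourier f).const_mul C).mono'
    ((𝓕 f).continuous.aestronglyMeasurable.mul
      (hg.comp (measurable_const_mul _)).aestronglyMeasurable) (.of_forall fun ξ => ?_)
  rw [norm_mul, ← mul_assoc, mul_comm]
  gcongr
  exact hbound _

lemma schwartz_norm_integral_fourier_mul_le {g : ℝ → ℂ} {C : ℝ}
    (hbound : ∀ u, ‖g u‖ ≤ C * (1 + u ^ 2) ^ 2) :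
    ‖∫ ξ, 𝓕 f ξ * g (2 * π * ξ)‖ ≤ C * fourierMoment f := by
  rw [fourierMoment, ← integral_const_mul]
  refine norm_integral_le_of_norm_le
    ((schwartz_integrable_weight_mul_norm_fourier f).const_mul C) (.of_forall fun ξ => ?_)
  rw [norm_mul, ← mul_assoc, mul_comm]
  gcongr
  exact hbound _

lemma schwartz_eq_integral_fourier (x : ℝ) :
    f x = ∫ ξ, 𝓕 f ξ * Complex.exp (Complex.I * (2 * π * ξ : ℝ) * x) := by
  have hinv : f x = 𝓕⁻ (𝓕 f : 𝓢(ℝ, ℂ)) x := by simp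
  rw [hinv, fourierInv_coe, Real.fourierInv_eq']
  refine integral_congr_ae (.of_forall fun ξ => ?_)
  simp only [smul_eq_mul, RCLike.inner_apply, conj_trivial]
  rw [mul_comm]
  congr 2
  push_cast
  ring

lemma schwartz_eq_integral_fourier_zero : f 0 = ∫ ξ, 𝓕 f ξ := by
  simpa using schwartz_eq_integral_fourier f 0

lemma schwartz_deriv_zero_eq_integral_fourier :
    deriv f 0 = ∫ ξ, 𝓕 f ξ * (Complex.I * (2 * π * ξ : ℝ)) := by
  have h := schwartz_eq_integral_fourier_zero (derivCLM ℂ ℂ f)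
  rw [derivCLM_apply] at h
  rw [h]
  refine integral_congr_ae (.of_forall fun ξ => ?_)
  have hderiv : (derivCLM ℂ ℂ f : ℝ → ℂ) = deriv f := funext fun x => derivCLM_apply ℂ f x
  simp only [fourier_coe, hderiv]
  rw [Real.fourier_deriv f.integrable f.differentiable
    (hderiv ▸ (derivCLM ℂ ℂ f).integrable)]
  simp only [smul_eq_mul]
  push_cast
  ring

lemma schwartz_integral_eq_integral_fourier_mul_charFun (μ : Measure ℝ) [IsFiniteMeasure μ] :
    ∫ x, f x ∂μ = ∫ ξ, 𝓕 f ξ * charFun μ (2 * π * ξ) := by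
  have hint : Integrable (Function.uncurry fun (x ξ : ℝ) =>
      𝓕 f ξ * Complex.exp (Complex.I * (2 * π * ξ : ℝ) * x)) (μ.prod volume) := by
    refine ((integrable_const (1 : ℝ)).mul_prod (𝓕 f).integrable.norm).mono'
      (Continuous.aestronglyMeasurable ?_) (.of_forall fun p => ?_)
    · have := (𝓕 f).continuous
      fun_prop
    · simp [Function.uncurry, Complex.norm_exp]
  simp_rw [schwartz_eq_integral_fourier f]
  rw [integral_integral_swap hint]
  simp_rw [integral_const_mul, charFun_apply_real]
  refine integral_congr_ae (.of_forall fun ξ => ?_)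
  simp only
  congr 2 with x
  congr 1
  push_cast
  ring

lemma schwartz_integrable_fourier_mul_I_mul :
    Integrable fun ξ => 𝓕 f ξ * (Complex.I * (2 * π * ξ : ℝ)) :=
  schwartz_integrable_fourier_mul f (g := fun u => Complex.I * u) (C := 1) (by fun_prop) fun u => by
    simp only [norm_mul, Complex.norm_I, Complex.norm_real, Real.norm_eq_abs, one_mul]
    nlinarith [sq_nonneg (|u| - 1), sq_abs u, sq_nonneg (u ^ 2)]

lemma schwartz_sub_sub_deriv_mul_eq_integral_fourier (x : ℝ) :
    f x - f 0 - deriv f 0 * x = ∫ ξ, 𝓕 f ξ * (Complex.exp (Complex.I * (2 * π * ξ : ℝ) * x) - 1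
      - Complex.I * (2 * π * ξ : ℝ) * x) := by
  have hexp : Integrable fun ξ => 𝓕 f ξ * Complex.exp (Complex.I * (2 * π * ξ : ℝ) * x) :=
    schwartz_integrable_fourier_mul f (g := fun u => Complex.exp (Complex.I * u * x)) (C := 1)
      (by fun_prop) fun u => by
        have hnorm : ‖Complex.exp (Complex.I * u * x)‖ = 1 := by simp [Complex.norm_exp]
        nlinarith [sq_nonneg u]
  have hlin := (schwartz_integrable_fourier_mul_I_mul f).mul_const (x : ℂ)
  calc f x - f 0 - deriv f 0 * x
      = ∫ ξ, (𝓕 f ξ * Complex.exp (Complex.I * (2 * π * ξ : ℝ) * x) - 𝓕 f ξ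
          - 𝓕 f ξ * (Complex.I * (2 * π * ξ : ℝ)) * x) := by
        rw [integral_sub (hexp.sub' (𝓕 f).integrable) hlin, integral_sub hexp (𝓕 f).integrable,
          integral_mul_const, ← schwartz_eq_integral_fourier, ← schwartz_eq_integral_fourier_zero,
          ← schwartz_deriv_zero_eq_integral_fourier]
    _ = _ := integral_congr_ae (.of_forall fun ξ => by ring)

lemma schwartz_norm_sub_sub_deriv_mul_le (x : ℝ) :
    ‖f x - f 0 - deriv f 0 * x‖ ≤ fourierMoment f * min (x ^ 2) |x| := by
  rw [schwartz_sub_sub_deriv_mul_eq_integral_fourier, mul_comm (fourierMoment f)]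
  refine schwartz_norm_integral_fourier_mul_le f
    (g := fun u => Complex.exp (Complex.I * u * x) - 1 - Complex.I * u * x) fun u => ?_
  calc ‖Complex.exp (Complex.I * u * x) - 1 - Complex.I * u * x‖
      ≤ (1 + u ^ 2) * min (x ^ 2) |x| := norm_exp_I_mul_sub_one_sub_le u x
    _ ≤ (1 + u ^ 2) ^ 2 * min (x ^ 2) |x| := by gcongr; nlinarith [sq_nonneg u]
    _ = _ := mul_comm _ _

lemma schwartz_norm_le_of_eq_zero (hf0 : f 0 = 0) (hf1 : deriv f 0 = 0) (x : ℝ) :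
    ‖f x‖ ≤ fourierMoment f * min (x ^ 2) |x| := by
  simpa [hf0, hf1] using schwartz_norm_sub_sub_deriv_mul_le f x

end Schwartz

/-- The exponent `iau + ∫ (e^{iux} − 1 − iux) ν(dx)` of an infinitely divisible law without Gaussian
part, compensated over the whole line, so that `a` is the mean of the law. -/
def centredLevyExponent (a : ℝ) (ν : Measure ℝ) (u : ℝ) : ℂ :=
  Complex.I * a * u + ∫ x : ℝ, (Complex.exp (Complex.I * u * x) - 1 - Complex.I * u * x) ∂ν

/-- The value at `0` of the generator applied to `f` of the Lévy process whose exponent is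
`centredLevyExponent a ν`. -/
def levyGeneratorAtZero (a : ℝ) (ν : Measure ℝ) (f : ℝ → ℂ) : ℂ :=
  a * deriv f 0 + ∫ x, (f x - f 0 - deriv f 0 * x) ∂ν

section LevyExponent

variable {ν : Measure ℝ} (a : ℝ)

lemma integrable_exp_I_mul_sub_one_sub (hν : Integrable (fun x => min (x ^ 2) |x|) ν) (u : ℝ) :
    Integrable (fun x : ℝ => Complex.exp (Complex.I * u * x) - 1 - Complex.I * u * x) ν :=
  (hν.const_mul (1 + u ^ 2)).mono' (by fun_prop)
    (.of_forall fun x => norm_exp_I_mul_sub_one_sub_le u x)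

lemma re_centredLevyExponent_nonpos (hν : Integrable (fun x => min (x ^ 2) |x|) ν) (u : ℝ) :
    (centredLevyExponent a ν u).re ≤ 0 := by
  have hre : (∫ x : ℝ, (Complex.exp (Complex.I * u * x) - 1 - Complex.I * u * x) ∂ν).re ≤ 0 := by
    rw [← RCLike.re_eq_complex_re, ← integral_re (integrable_exp_I_mul_sub_one_sub hν u)]
    exact integral_nonpos fun x => by simp [Complex.exp_re, Real.cos_le_one]
  simpa [centredLevyExponent] using hre

lemma norm_centredLevyExponent_le (hν : Integrable (fun x => min (x ^ 2) |x|) ν) (u : ℝ) :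
    ‖centredLevyExponent a ν u‖ ≤ (|a| + ∫ x, min (x ^ 2) |x| ∂ν) * (1 + u ^ 2) := by
  have hdrift : ‖Complex.I * a * u‖ ≤ |a| * (1 + u ^ 2) := by
    simp only [norm_mul, Complex.norm_I, one_mul, Complex.norm_real, Real.norm_eq_abs]
    gcongr
    nlinarith [sq_nonneg (|u| - 1), sq_abs u]
  have hjump := norm_integral_le_of_norm_le (hν.const_mul (1 + u ^ 2))
    (.of_forall fun x => norm_exp_I_mul_sub_one_sub_le u x)
  rw [integral_const_mul] at hjump
  calc ‖centredLevyExponent a ν u‖ ≤ _ := norm_add_le _ _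
    _ ≤ |a| * (1 + u ^ 2) + (1 + u ^ 2) * ∫ x, min (x ^ 2) |x| ∂ν := add_le_add hdrift hjump
    _ = _ := by ring

lemma measurable_centredLevyExponent [SFinite ν] : Measurable (centredLevyExponent a ν) := by
  have hjump : StronglyMeasurable fun u : ℝ =>
      ∫ x : ℝ, (Complex.exp (Complex.I * u * x) - 1 - Complex.I * u * x) ∂ν :=
    StronglyMeasurable.integral_prod_right'
      (f := fun p : ℝ × ℝ => Complex.exp (Complex.I * p.1 * p.2) - 1 - Complex.I * p.1 * p.2)
      (by fun_prop : Continuous _).stronglyMeasurable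
  unfold centredLevyExponent
  exact Measurable.add (by fun_prop) hjump.measurable

lemma integral_fourier_mul_centredLevyExponent [SFinite ν]
    (hν : Integrable (fun x => min (x ^ 2) |x|) ν) (f : 𝓢(ℝ, ℂ)) :
    ∫ ξ, 𝓕 f ξ * centredLevyExponent a ν (2 * π * ξ) = levyGeneratorAtZero a ν f := by
  let K (ξ x : ℝ) : ℂ := Complex.exp (Complex.I * (2 * π * ξ : ℝ) * x) - 1
    - Complex.I * (2 * π * ξ : ℝ) * x
  have hweight : Integrable fun ξ => (1 + (2 * π * ξ) ^ 2) * ‖𝓕 f ξ‖ :=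
    (schwartz_integrable_weight_mul_norm_fourier f).mono' (by
      have := (𝓕 f).continuous
      fun_prop) (.of_forall fun ξ => by
      rw [Real.norm_of_nonneg (by positivity)]
      gcongr
      nlinarith [sq_nonneg (2 * π * ξ), sq_nonneg ((2 * π * ξ) ^ 2)])
  have hK : Integrable (Function.uncurry fun ξ x => 𝓕 f ξ * K ξ x) (volume.prod ν) := by
    refine (hweight.mul_prod hν).mono' (Continuous.aestronglyMeasurable ?_)
      (.of_forall fun p => ?_)
    · have := (𝓕 f).continuous
      fun_prop
    · have := norm_exp_I_mul_sub_one_sub_le (2 * π * p.1) p.2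
      simp only [Function.uncurry, norm_mul, K]
      nlinarith [norm_nonneg (𝓕 f p.1)]
  have hdrift := (schwartz_integrable_fourier_mul_I_mul f).mul_const (a : ℂ)
  have hsplit (ξ : ℝ) : 𝓕 f ξ * centredLevyExponent a ν (2 * π * ξ)
      = 𝓕 f ξ * (Complex.I * (2 * π * ξ : ℝ)) * a + ∫ x, 𝓕 f ξ * K ξ x ∂ν := by
    rw [integral_const_mul, centredLevyExponent]
    ring
  simp_rw [hsplit]
  have hjump : Integrable fun ξ => ∫ x, 𝓕 f ξ * K ξ x ∂ν := hK.integral_prod_left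
  rw [integral_add hdrift hjump, integral_mul_const,
    ← schwartz_deriv_zero_eq_integral_fourier, integral_integral_swap hK, levyGeneratorAtZero,
    mul_comm]
  simp_rw [schwartz_sub_sub_deriv_mul_eq_integral_fourier f, K]

theorem norm_integral_sub_integral_sub_levyGeneratorAtZero_le [SFinite ν]
    (hν : Integrable (fun x => min (x ^ 2) |x|) ν) {μ γ : Measure ℝ} [IsProbabilityMeasure μ]
    [IsProbabilityMeasure γ] {s K : ℝ}
    (hμ : ∀ u, charFun μ u = charFun γ u * Complex.exp (centredLevyExponent a ν u))
    (hγ : ∀ u, ‖charFun γ u - 1‖ ≤ s * u ^ 2)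
    (hK : |a| + ∫ x, min (x ^ 2) |x| ∂ν ≤ K) (f : 𝓢(ℝ, ℂ)) :
    ‖∫ x, f x ∂μ - ∫ x, f x ∂γ - levyGeneratorAtZero a ν f‖ ≤ K * (K + s) * fourierMoment f := by
  let ψ := centredLevyExponent a ν
  have hψ (u : ℝ) : ‖ψ u‖ ≤ K * (1 + u ^ 2) :=
    (norm_centredLevyExponent_le a hν u).trans (by gcongr)
  have hK0 : 0 ≤ K := by simpa using (norm_nonneg _).trans (hψ 0)
  have hs : 0 ≤ s := by simpa using (norm_nonneg _).trans (hγ 1)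
  have hbound (u : ℝ) : ‖charFun μ u - charFun γ u - ψ u‖ ≤ K * (K + s) * (1 + u ^ 2) ^ 2 :=
    calc ‖charFun μ u - charFun γ u - ψ u‖ ≤ ‖ψ u‖ ^ 2 + ‖charFun γ u - 1‖ * ‖ψ u‖ := by
          rw [hμ]
          exact norm_mul_exp_sub_sub_le (norm_charFun_le_one u)
            (re_centredLevyExponent_nonpos a hν u)
      _ ≤ (K * (1 + u ^ 2)) ^ 2 + s * (1 + u ^ 2) * (K * (1 + u ^ 2)) := by
          gcongr
          · exact hψ u
          · exact (hγ u).trans (by gcongr; linarith)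
          · exact hψ u
      _ = K * (K + s) * (1 + u ^ 2) ^ 2 := by ring
  have hchar (ρ : Measure ℝ) [IsProbabilityMeasure ρ] :
      Integrable fun ξ => 𝓕 f ξ * charFun ρ (2 * π * ξ) :=
    schwartz_integrable_fourier_mul f (C := 1) measurable_charFun fun u =>
      (norm_charFun_le_one u).trans (by nlinarith [sq_nonneg u])
  have hψint : Integrable fun ξ => 𝓕 f ξ * centredLevyExponent a ν (2 * π * ξ) :=
    schwartz_integrable_fourier_mul f (C := K) (measurable_centredLevyExponent a) fun u =>
      (hψ u).trans (by gcongr; nlinarith [sq_nonneg u])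
  convert schwartz_norm_integral_fourier_mul_le f hbound using 2
  rw [schwartz_integral_eq_integral_fourier_mul_charFun f μ,
    schwartz_integral_eq_integral_fourier_mul_charFun f γ,
    ← integral_fourier_mul_centredLevyExponent a hν f, ← integral_sub (hchar μ) (hchar γ),
    ← integral_sub ((hchar μ).sub' (hchar γ)) hψint]
  exact integral_congr_ae (.of_forall fun ξ => by ring)

end LevyExponent

lemma map_withDensity_comp {α β : Type*} [MeasurableSpace α] [MeasurableSpace β] (μ : Measure α)
    {f : α → β} (hf : Measurable f) {g : β → ℝ≥0∞} (hg : Measurable g) :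
    (μ.withDensity (g ∘ f)).map f = (μ.map f).withDensity g := by
  ext s hs
  rw [Measure.map_apply hf hs, withDensity_apply _ (hf hs), withDensity_apply _ hs,
    setLIntegral_map hs hg hf]
  rfl

section LevyMeasure

variable {Y Cp Cm : ℝ} {q : ℝ → ℝ}

lemma levyDensity_eq_mul (Y Cp Cm : ℝ) (q : ℝ → ℝ) (x : ℝ) :
    levyDensity Y Cp Cm q x = q x * levyDensity Y Cp Cm 1 x := by
  simp only [levyDensity, Pi.one_apply]
  ring

lemma levyDensity_mul {e : ℝ} (he : 0 < e) (x : ℝ) :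
    levyDensity Y Cp Cm q (e * x) = e ^ (-1 - Y) * levyDensity Y Cp Cm (fun z => q (e * z)) x := by
  simp only [levyDensity, mul_pos_iff_of_pos_left he, mul_neg_iff, he, he.not_gt, false_and,
    true_and, or_false, abs_mul, abs_of_pos he, Real.mul_rpow he.le (abs_nonneg x)]
  ring

lemma measurable_levyDensity (hq : Measurable q) : Measurable (levyDensity Y Cp Cm q) := by
  have hsign : Measurable fun x : ℝ => if 0 < x then Cp else if x < 0 then Cm else 0 :=
    .ite measurableSet_Ioi measurable_const (.ite measurableSet_Iio measurable_const
      measurable_const)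
  unfold levyDensity
  fun_prop

lemma levyMeasure_eq_withDensity_levyMeasure_one (hq : Measurable q) (hq0 : ∀ x, 0 ≤ q x) :
    levyMeasure Y Cp Cm q = (levyMeasure Y Cp Cm 1).withDensity fun x => ENNReal.ofReal (q x) := by
  rw [levyMeasure, levyMeasure, ← withDensity_mul _
    (measurable_levyDensity measurable_one).ennreal_ofReal hq.ennreal_ofReal]
  congr 1 with x
  rw [Pi.mul_apply, levyDensity_eq_mul, ENNReal.ofReal_mul (hq0 x), mul_comm]

lemma map_inv_mul_levyMeasure (hq : Measurable q) {e : ℝ} (he : 0 < e) :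
    (levyMeasure Y Cp Cm q).map (e⁻¹ * ·)
      = ENNReal.ofReal (e ^ (-Y)) • levyMeasure Y Cp Cm fun x => q (e * x) := by
  have hdensity : (fun x => ENNReal.ofReal (levyDensity Y Cp Cm q x))
      = (fun z => ENNReal.ofReal (levyDensity Y Cp Cm q (e * z))) ∘ (e⁻¹ * ·) := by
    ext x
    simp [he.ne']
  have hscaled : (fun z => ENNReal.ofReal (levyDensity Y Cp Cm q (e * z)))
      = ENNReal.ofReal (e ^ (-1 - Y)) •
        fun z => ENNReal.ofReal (levyDensity Y Cp Cm (fun x => q (e * x)) z) := by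
    ext z
    rw [levyDensity_mul he, ENNReal.ofReal_mul (Real.rpow_nonneg he.le _), Pi.smul_apply,
      smul_eq_mul]
  have hpow : e * e ^ (-1 - Y) = e ^ (-Y) := by
    rw [show -Y = 1 + (-1 - Y) by ring, Real.rpow_add he, Real.rpow_one]
  have hmeas := measurable_levyDensity (Y := Y) (Cp := Cp) (Cm := Cm) hq
  rw [levyMeasure, hdensity, map_withDensity_comp _ (measurable_const_mul _) (by fun_prop),
    Real.map_volume_mul_left (inv_ne_zero he.ne'), inv_inv, abs_of_pos he, hscaled,
    withDensity_smul_measure, withDensity_smul' _ _ ENNReal.ofReal_ne_top, smul_smul,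
    ← ENNReal.ofReal_mul he.le, hpow, levyMeasure]

/-- The radial part `t^{−1−Y} dt` on `(0, ∞)` of a `Y`-stable Lévy measure. -/
def radialMeasure (Y : ℝ) : Measure ℝ :=
  (volume.restrict (Ioi 0)).withDensity fun t => ENNReal.ofReal (t ^ (-1 - Y))

lemma map_abs_restrict_Ioi : (volume.restrict (Ioi (0 : ℝ))).map abs = volume.restrict (Ioi 0) := by
  have habs : abs =ᵐ[volume.restrict (Ioi (0 : ℝ))] id := by
    filter_upwards [ae_restrict_mem measurableSet_Ioi] with x hx using abs_of_pos hx
  rw [Measure.map_congr habs, Measure.map_id]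

lemma map_abs_restrict_Iio : (volume.restrict (Iio (0 : ℝ))).map abs = volume.restrict (Ioi 0) := by
  have habs : abs =ᵐ[volume.restrict (Iio (0 : ℝ))] Neg.neg := by
    filter_upwards [ae_restrict_mem measurableSet_Iio] with x hx using abs_of_neg hx
  have hpre : Neg.neg ⁻¹' Ioi (0 : ℝ) = Iio 0 := by simp
  rw [Measure.map_congr habs, ← hpre, ← Measure.restrict_map measurable_neg measurableSet_Ioi,
    Measure.map_neg_eq_self]

lemma levyMeasure_one_eq (hCp : 0 ≤ Cp) (hCm : 0 ≤ Cm) :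
    levyMeasure Y Cp Cm 1
      = ENNReal.ofReal Cp • (volume.restrict (Ioi 0)).withDensity
          ((fun t => ENNReal.ofReal (t ^ (-1 - Y))) ∘ abs)
        + ENNReal.ofReal Cm • (volume.restrict (Iio 0)).withDensity
          ((fun t => ENNReal.ofReal (t ^ (-1 - Y))) ∘ abs) := by
  have hmeas : Measurable ((fun t => ENNReal.ofReal (t ^ (-1 - Y))) ∘ abs) := by fun_prop
  rw [← withDensity_indicator measurableSet_Ioi, ← withDensity_indicator measurableSet_Iio,
    ← withDensity_smul _ (hmeas.indicator measurableSet_Ioi),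
    ← withDensity_smul _ (hmeas.indicator measurableSet_Iio),
    ← withDensity_add_left ((hmeas.indicator measurableSet_Ioi).const_smul _), levyMeasure]
  congr 1 with x
  rcases lt_trichotomy x 0 with hx | rfl | hx
  · simp [levyDensity, hx, hx.not_gt, ENNReal.ofReal_mul hCm]
  · simp [levyDensity]
  · simp [levyDensity, hx, hx.not_gt, ENNReal.ofReal_mul hCp]

lemma map_abs_levyMeasure_one (hCp : 0 ≤ Cp) (hCm : 0 ≤ Cm) :
    (levyMeasure Y Cp Cm 1).map abs = ENNReal.ofReal (Cp + Cm) • radialMeasure Y := by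
  have hmeas : Measurable fun t : ℝ => ENNReal.ofReal (t ^ (-1 - Y)) := by fun_prop
  rw [levyMeasure_one_eq hCp hCm, Measure.map_add _ _ measurable_abs, Measure.map_smul,
    Measure.map_smul, map_withDensity_comp _ measurable_abs hmeas,
    map_withDensity_comp _ measurable_abs hmeas, map_abs_restrict_Ioi, map_abs_restrict_Iio,
    ← add_smul, ← ENNReal.ofReal_add hCp hCm, radialMeasure]

lemma integrable_radialMeasure_iff {F : ℝ → ℝ} :
    Integrable F (radialMeasure Y) ↔ IntegrableOn (fun t => t ^ (-1 - Y) * F t) (Ioi 0) := by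
  rw [radialMeasure, integrable_withDensity_iff_integrable_smul' (by fun_prop) (by simp)]
  refine integrableOn_congr_fun (fun t ht => ?_) measurableSet_Ioi
  simp [ENNReal.toReal_ofReal (Real.rpow_nonneg (le_of_lt ht) _)]

lemma integral_radialMeasure (F : ℝ → ℝ) :
    ∫ t, F t ∂radialMeasure Y = ∫ t in Ioi 0, t ^ (-1 - Y) * F t := by
  rw [radialMeasure, integral_withDensity_eq_integral_toReal_smul (by fun_prop) (by simp)]
  refine setIntegral_congr_fun measurableSet_Ioi fun t ht => ?_
  simp [ENNReal.toReal_ofReal (Real.rpow_nonneg (le_of_lt ht) _)]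

lemma integrable_comp_abs_levyMeasure_one (hCp : 0 ≤ Cp) (hCm : 0 ≤ Cm) {F : ℝ → ℝ}
    (hF : Measurable F) (hint : Integrable F (radialMeasure Y)) :
    Integrable (fun x => F |x|) (levyMeasure Y Cp Cm 1) := by
  refine (integrable_map_measure hF.aestronglyMeasurable measurable_abs.aemeasurable).mp ?_
  rw [map_abs_levyMeasure_one hCp hCm]
  exact hint.smul_measure ENNReal.ofReal_ne_top

lemma integral_comp_abs_levyMeasure_one (hCp : 0 ≤ Cp) (hCm : 0 ≤ Cm) {F : ℝ → ℝ}
    (hF : Measurable F) :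
    ∫ x, F |x| ∂levyMeasure Y Cp Cm 1 = (Cp + Cm) * ∫ t, F t ∂radialMeasure Y := by
  rw [← integral_map measurable_abs.aemeasurable hF.aestronglyMeasurable,
    map_abs_levyMeasure_one hCp hCm, integral_smul_measure,
    ENNReal.toReal_ofReal (add_nonneg hCp hCm), smul_eq_mul]

lemma integrable_min_radialMeasure (hY1 : 1 < Y) (hY2 : Y < 2) :
    Integrable (fun t => min (t ^ 2) t) (radialMeasure Y) := by
  rw [integrable_radialMeasure_iff, ← Ioc_union_Ioi_eq_Ioi zero_le_one]
  refine IntegrableOn.union ?_ ?_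
  · have hsmall : IntegrableOn (fun t : ℝ => t ^ (1 - Y)) (Ioc 0 1) := by
      rw [← intervalIntegrable_iff_integrableOn_Ioc_of_le zero_le_one]
      exact intervalIntegral.intervalIntegrable_rpow' (by linarith)
    refine hsmall.congr_fun (fun t ht => ?_) measurableSet_Ioc
    have hmin : min (t ^ 2) t = t ^ 2 := min_eq_left (by nlinarith [ht.1, ht.2])
    simp only [hmin]
    rw [← Real.rpow_natCast, ← Real.rpow_add ht.1]
    congr 1
    push_cast
    ring
  · refine (integrableOn_Ioi_rpow_of_lt (a := -Y) (c := 1) (by linarith) one_pos).congr_fun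
      (fun t ht => ?_) measurableSet_Ioi
    rw [mem_Ioi] at ht
    have hmin : min (t ^ 2) t = t := min_eq_right (by nlinarith)
    simp only [hmin]
    rw [← Real.rpow_add_one (by positivity)]
    congr 1
    ring

lemma integrable_min_levyMeasure_one (hY1 : 1 < Y) (hY2 : Y < 2) (hCp : 0 ≤ Cp) (hCm : 0 ≤ Cm) :
    Integrable (fun x => min (x ^ 2) |x|) (levyMeasure Y Cp Cm 1) := by
  simpa only [sq_abs] using integrable_comp_abs_levyMeasure_one hCp hCm (by fun_prop)
    (integrable_min_radialMeasure hY1 hY2)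

lemma levyMeasure_le (hCp : 0 ≤ Cp) (hCm : 0 ≤ Cm) {M : ℝ} (hM : ∀ x, q x ≤ M) :
    levyMeasure Y Cp Cm q ≤ ENNReal.ofReal M • levyMeasure Y Cp Cm 1 := by
  rw [levyMeasure, levyMeasure, ← withDensity_smul' _ _ ENNReal.ofReal_ne_top]
  refine withDensity_mono (.of_forall fun x => ?_)
  have hdensity : 0 ≤ levyDensity Y Cp Cm 1 x := by
    unfold levyDensity
    simp only [Pi.one_apply, mul_one]
    split_ifs <;> positivity
  beta_reduce
  rw [levyDensity_eq_mul Y Cp Cm q, Pi.smul_apply, smul_eq_mul, ← ENNReal.ofReal_mul' hdensity]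
  gcongr
  exact hM x

lemma integrable_levyMeasure_of_le (hCp : 0 ≤ Cp) (hCm : 0 ≤ Cm) {M : ℝ} (hM : ∀ x, q x ≤ M)
    {E : Type*} [NormedAddCommGroup E] {g : ℝ → E} (hg : Integrable g (levyMeasure Y Cp Cm 1)) :
    Integrable g (levyMeasure Y Cp Cm q) :=
  (hg.smul_measure ENNReal.ofReal_ne_top).mono_measure (levyMeasure_le hCp hCm hM)

lemma integral_levyMeasure_le (hCp : 0 ≤ Cp) (hCm : 0 ≤ Cm) {M : ℝ} (hM0 : 0 ≤ M)
    (hM : ∀ x, q x ≤ M) {g : ℝ → ℝ} (hg0 : ∀ x, 0 ≤ g x)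
    (hg : Integrable g (levyMeasure Y Cp Cm 1)) :
    ∫ x, g x ∂levyMeasure Y Cp Cm q ≤ M * ∫ x, g x ∂levyMeasure Y Cp Cm 1 := by
  have hle := integral_mono_measure (levyMeasure_le hCp hCm hM) (.of_forall hg0)
    (hg.smul_measure ENNReal.ofReal_ne_top)
  rwa [integral_smul_measure, ENNReal.toReal_ofReal hM0] at hle

lemma integral_levyMeasure_eq (hq : Measurable q) (hq0 : ∀ x, 0 ≤ q x) {E : Type*}
    [NormedAddCommGroup E] [NormedSpace ℝ E] (g : ℝ → E) :
    ∫ x, g x ∂levyMeasure Y Cp Cm q = ∫ x, q x • g x ∂levyMeasure Y Cp Cm 1 := by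
  rw [levyMeasure_eq_withDensity_levyMeasure_one hq hq0,
    integral_withDensity_eq_integral_toReal_smul hq.ennreal_ofReal (by simp)]
  simp only [ENNReal.toReal_ofReal (hq0 _)]

lemma tendsto_integral_levyMeasure_comp_mul (hq : Measurable q) (hq0 : ∀ x, 0 ≤ q x) {M : ℝ}
    (hM : ∀ x, q x ≤ M) (hqlim : Tendsto q (𝓝[≠] 0) (𝓝 1)) {E : Type*} [NormedAddCommGroup E]
    [NormedSpace ℝ E] {g : ℝ → E} (hg : Integrable g (levyMeasure Y Cp Cm 1)) :
    Tendsto (fun e => ∫ x, g x ∂levyMeasure Y Cp Cm fun x => q (e * x)) (𝓝[>] 0)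
      (𝓝 (∫ x, g x ∂levyMeasure Y Cp Cm 1)) := by
  have hmul {x : ℝ} (hx : x ≠ 0) : Tendsto (fun e : ℝ => e * x) (𝓝[>] 0) (𝓝[≠] 0) := by
    refine tendsto_nhdsWithin_iff.mpr ⟨?_, ?_⟩
    · simpa using (tendsto_id.mul_const x).mono_left (nhdsWithin_le_nhds (a := (0 : ℝ)))
    · filter_upwards [self_mem_nhdsWithin] with e he using mul_ne_zero (ne_of_gt he) hx
  have hne : ∀ᵐ x ∂levyMeasure Y Cp Cm 1, x ≠ 0 :=
    (withDensity_absolutelyContinuous _ _).ae_le (Measure.ae_ne volume 0)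
  have heq (e : ℝ) : ∫ x, g x ∂levyMeasure Y Cp Cm (fun x => q (e * x))
      = ∫ x, q (e * x) • g x ∂levyMeasure Y Cp Cm 1 :=
    integral_levyMeasure_eq (by fun_prop) (fun x => hq0 _) g
  simp_rw [heq]
  refine tendsto_integral_filter_of_dominated_convergence (fun x => M * ‖g x‖)
    (.of_forall fun e => ?_) (.of_forall fun e => .of_forall fun x => ?_)
    (hg.norm.const_mul M) ?_
  · exact (by fun_prop : Measurable fun x => q (e * x)).aestronglyMeasurable.smul
      hg.aestronglyMeasurable
  · rw [norm_smul, Real.norm_of_nonneg (hq0 _)]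
    gcongr
    exact hM _
  · filter_upwards [hne] with x hx
    simpa using (hqlim.comp (hmul hx)).smul_const (g x)

end LevyMeasure

lemma centredLevyExponent_div (a : ℝ) (ν : Measure ℝ) (e u : ℝ) :
    centredLevyExponent a ν (u / e) = centredLevyExponent (a / e) (ν.map (e⁻¹ * ·)) u := by
  rw [centredLevyExponent, centredLevyExponent,
    integral_map (by fun_prop) (Continuous.aestronglyMeasurable (by fun_prop))]
  push_cast
  congr 1
  · ring
  · congr 1 with x
    rw [show Complex.I * u * ((e : ℂ)⁻¹ * x) = Complex.I * (u / e) * x by ring]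

lemma mul_centredLevyExponent {c : ℝ} (hc : 0 ≤ c) (a : ℝ) (ν : Measure ℝ) (u : ℝ) :
    c * centredLevyExponent a ν u = centredLevyExponent (c * a) (ENNReal.ofReal c • ν) u := by
  rw [centredLevyExponent, centredLevyExponent, integral_smul_measure, ENNReal.toReal_ofReal hc,
    Complex.real_smul]
  push_cast
  ring

lemma norm_charFun_gaussianReal_zero_sub_one_le (v : ℝ≥0) (u : ℝ) :
    ‖charFun (gaussianReal 0 v) u - 1‖ ≤ v * u ^ 2 := by
  have hexponent :
      (u * (0 : ℝ) * Complex.I - v * u ^ 2 / 2 : ℂ) = ((-(v * u ^ 2 / 2) : ℝ) : ℂ) := by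
    push_cast
    ring
  have hnonneg : 0 ≤ v * u ^ 2 := by positivity
  rw [charFun_gaussianReal, hexponent]
  refine (norm_exp_sub_one_le (by rw [Complex.ofReal_re]; linarith)).trans ?_
  rw [Complex.norm_real, Real.norm_eq_abs, abs_neg, abs_of_nonneg (by positivity)]
  linarith

lemma charFun_map_mul_add_div {Ω : Type*} [MeasurableSpace Ω] {P : Measure Ω}
    [IsProbabilityMeasure P] {W J : Ω → ℝ} (hWmeas : Measurable W) (hJmeas : Measurable J)
    (hW : P.map W = gaussianReal 0 1) (hindep : IndepFun W J P) {ψ : ℝ → ℂ}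
    (hJ : ∀ u : ℝ, ∫ ω, Complex.exp (Complex.I * u * J ω) ∂P = Complex.exp (ψ u)) (s e u : ℝ) :
    charFun (P.map fun ω => (s * W ω + J ω) / e) u
      = charFun (gaussianReal 0 (((s / e) ^ 2).toNNReal)) u * Complex.exp (ψ (u / e)) := by
  have hgauss : P.map (fun ω => s / e * W ω) = gaussianReal 0 (((s / e) ^ 2).toNNReal) := by
    have hcomp : (fun ω => s / e * W ω) = (s / e * ·) ∘ W := rfl
    rw [hcomp, ← Measure.map_map (measurable_const_mul (s / e)) hWmeas, hW,
      gaussianReal_map_const_mul, mul_zero, mul_one, Real.toNNReal_of_nonneg (sq_nonneg _)]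
  have hjump : charFun (P.map fun ω => e⁻¹ * J ω) u = Complex.exp (ψ (u / e)) := by
    rw [← hJ, charFun_apply_real, integral_map (by fun_prop) (by fun_prop)]
    congr 1 with ω
    congr 1
    push_cast
    ring
  have hsum : (fun ω => (s * W ω + J ω) / e) = fun ω => s / e * W ω + e⁻¹ * J ω := by
    ext ω
    ring
  have hscaled : IndepFun (fun ω => s / e * W ω) (fun ω => e⁻¹ * J ω) P :=
    hindep.comp (measurable_const_mul _) (measurable_const_mul _)
  rw [hsum, hscaled.charFun_map_fun_add_eq_mul (by fun_prop) (by fun_prop), Pi.mul_apply, hgauss,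
    hjump]

/-- The mean of `J_1`, which is the drift of `J` once all jumps are compensated. -/
def levyMean (b Y Cp Cm : ℝ) (q : ℝ → ℝ) : ℝ :=
  b + ∫ x in {x | 1 < |x|}, x ∂levyMeasure Y Cp Cm q

section SmallTime

variable {b Y Cp Cm : ℝ} {q : ℝ → ℝ}

lemma psiJ_eq_centredLevyExponent
    (hν : Integrable (fun x => min (x ^ 2) |x|) (levyMeasure Y Cp Cm q)) (u : ℝ) :
    psiJ b Y Cp Cm q u
      = centredLevyExponent (levyMean b Y Cp Cm q) (levyMeasure Y Cp Cm q) u := by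
  have hlarge : MeasurableSet {x : ℝ | 1 < |x|} := measurableSet_lt measurable_const measurable_abs
  have hint : Integrable ({x : ℝ | 1 < |x|}.indicator fun x => x) (levyMeasure Y Cp Cm q) := by
    refine hν.mono' (measurable_id.indicator hlarge).aestronglyMeasurable
      (.of_forall fun x => ?_)
    by_cases hx : 1 < |x|
    · rw [indicator_of_mem (by exact hx), Real.norm_eq_abs, ← sq_abs]
      exact le_min (by nlinarith) le_rfl
    · rw [indicator_of_notMem (by exact hx), norm_zero]
      positivity
  have hsplit (x : ℝ) : Complex.exp (Complex.I * u * x) - 1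
        - (if |x| ≤ 1 then Complex.I * u * x else 0)
      = (Complex.exp (Complex.I * u * x) - 1 - Complex.I * u * x)
        + Complex.I * u * ({x : ℝ | 1 < |x|}.indicator (fun x => x) x : ℝ) := by
    by_cases hx : |x| ≤ 1
    · simp [hx]
    · simp [hx, not_le.mp hx]
  simp_rw [psiJ, hsplit]
  have hlin : Integrable (fun x : ℝ => Complex.I * u
      * ({x : ℝ | 1 < |x|}.indicator (fun x => x) x : ℝ)) (levyMeasure Y Cp Cm q) :=
    hint.ofReal.const_mul _
  rw [integral_add (integrable_exp_I_mul_sub_one_sub hν u) hlin, integral_const_mul,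
    integral_complex_ofReal, integral_indicator hlarge, centredLevyExponent, levyMean]
  push_cast
  ring

lemma mul_psiJ_div (hq : Measurable q)
    (hν : Integrable (fun x => min (x ^ 2) |x|) (levyMeasure Y Cp Cm q)) {h e : ℝ} (hh : 0 ≤ h)
    (he : 0 < e) (u : ℝ) :
    h * psiJ b Y Cp Cm q (u / e) = centredLevyExponent (h * (levyMean b Y Cp Cm q / e))
      (ENNReal.ofReal (h * e ^ (-Y)) • levyMeasure Y Cp Cm fun x => q (e * x)) u := by
  rw [psiJ_eq_centredLevyExponent hν, centredLevyExponent_div, mul_centredLevyExponent hh,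
    map_inv_mul_levyMeasure hq he, smul_smul, ← ENNReal.ofReal_mul hh]

lemma norm_integral_sub_integral_div_sub_le (hY1 : 1 < Y) (hY2 : Y < 2) (hCp : 0 ≤ Cp)
    (hCm : 0 ≤ Cm) (hq : Measurable q) {M : ℝ} (hM0 : 0 ≤ M) (hM : ∀ x, q x ≤ M) {K : ℝ}
    (hK : |levyMean b Y Cp Cm q| + M * ∫ x, min (x ^ 2) |x| ∂levyMeasure Y Cp Cm 1 ≤ K)
    {h e : ℝ} (hh : 0 < h) (he : 0 < e) (he1 : e ≤ 1) {μ : Measure ℝ} [IsProbabilityMeasure μ]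
    {v : ℝ≥0} (hμ : ∀ u, charFun μ u
      = charFun (gaussianReal 0 v) u * Complex.exp (h * psiJ b Y Cp Cm q (u / e)))
    {f : 𝓢(ℝ, ℂ)} (hf0 : f 0 = 0) (hf1 : deriv f 0 = 0) :
    ‖(∫ x, f x ∂μ - ∫ x, f x ∂gaussianReal 0 v) / (h * e ^ (-Y) : ℝ)
        - ∫ x, f x ∂levyMeasure Y Cp Cm fun x => q (e * x)‖
      ≤ K * (h * e ^ (-Y) * K + v) * fourierMoment f := by
  set m := levyMean b Y Cp Cm q
  set τ := h * e ^ (-Y)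
  set νe := levyMeasure Y Cp Cm fun x => q (e * x)
  have hτ : 0 < τ := by positivity
  have hmin := integrable_min_levyMeasure_one hY1 hY2 hCp hCm
  have hν (e : ℝ) := integrable_levyMeasure_of_le (q := fun x => q (e * x)) hCp hCm
    (fun x => hM _) hmin
  have hdrift : |h * (m / e)| ≤ τ * |m| := by
    rw [abs_mul, abs_div, abs_of_pos hh, abs_of_pos he, div_eq_inv_mul, ← mul_assoc,
      ← Real.rpow_neg_one]
    exact mul_le_mul_of_nonneg_right (mul_le_mul_of_nonneg_left
      (Real.rpow_le_rpow_of_exponent_ge he he1 (by linarith)) hh.le) (abs_nonneg m)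
  have hmass : ∫ x, min (x ^ 2) |x| ∂(ENNReal.ofReal τ • νe)
      ≤ τ * (M * ∫ x, min (x ^ 2) |x| ∂levyMeasure Y Cp Cm 1) := by
    rw [integral_smul_measure, ENNReal.toReal_ofReal hτ.le, smul_eq_mul]
    gcongr
    exact integral_levyMeasure_le hCp hCm hM0 (fun x => hM _) (fun x => by positivity) hmin
  have : SFinite νe := by unfold νe levyMeasure; infer_instance
  have hψ (u : ℝ) : charFun μ u = charFun (gaussianReal 0 v) u
      * Complex.exp (centredLevyExponent (h * (m / e)) (ENNReal.ofReal τ • νe) u) := by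
    rw [hμ, mul_psiJ_div hq (by simpa using hν 1) hh.le he]
  have hmain := norm_integral_sub_integral_sub_levyGeneratorAtZero_le (h * (m / e))
    ((hν e).smul_measure ENNReal.ofReal_ne_top) hψ (norm_charFun_gaussianReal_zero_sub_one_le v)
    (K := τ * K) (by nlinarith [mul_le_mul_of_nonneg_left hK hτ.le]) f
  have hgen : levyGeneratorAtZero (h * (m / e) : ℝ) (ENNReal.ofReal τ • νe) f
      = τ * ∫ x, f x ∂νe := by
    simp [levyGeneratorAtZero, hf0, hf1, integral_smul_measure, ENNReal.toReal_ofReal hτ.le]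
  have hτ' : (τ : ℂ) ≠ 0 := by exact_mod_cast hτ.ne'
  rw [hgen] at hmain
  rw [div_sub' hτ', norm_div, Complex.norm_real, Real.norm_of_nonneg hτ.le, div_le_iff₀ hτ]
  linarith

theorem tendsto_integral_sub_integral_div (hY1 : 1 < Y) (hY2 : Y < 2) (hCp : 0 ≤ Cp)
    (hCm : 0 ≤ Cm) (hq : Measurable q) (hq0 : ∀ x, 0 ≤ q x) {M : ℝ} (hM : ∀ x, q x ≤ M)
    (hqlim : Tendsto q (𝓝[≠] 0) (𝓝 1)) {ε : ℝ → ℝ} (hε : Tendsto ε (𝓝[>] 0) (𝓝[>] 0))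
    (hτ : Tendsto (fun h => h * ε h ^ (-Y)) (𝓝[>] 0) (𝓝 0)) {μ : ℝ → Measure ℝ}
    [∀ h, IsProbabilityMeasure (μ h)] {v : ℝ → ℝ≥0}
    (hv : Tendsto (fun h => (v h : ℝ)) (𝓝[>] 0) (𝓝 0))
    (hμ : ∀ h, 0 < h → ∀ u, charFun (μ h) u
      = charFun (gaussianReal 0 (v h)) u * Complex.exp (h * psiJ b Y Cp Cm q (u / ε h)))
    {f : 𝓢(ℝ, ℂ)} (hf0 : f 0 = 0) (hf1 : deriv f 0 = 0) :
    Tendsto (fun h => (∫ x, f x ∂μ h - ∫ x, f x ∂gaussianReal 0 (v h))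
        / (h * ε h ^ (-Y) : ℝ)) (𝓝[>] 0) (𝓝 (∫ x, f x ∂levyMeasure Y Cp Cm 1)) := by
  have hM0 : 0 ≤ M := (hq0 0).trans (hM 0)
  let K := |levyMean b Y Cp Cm q| + M * ∫ x, min (x ^ 2) |x| ∂levyMeasure Y Cp Cm 1
  have hint : Integrable f (levyMeasure Y Cp Cm 1) :=
    ((integrable_min_levyMeasure_one hY1 hY2 hCp hCm).const_mul _).mono'
      f.continuous.aestronglyMeasurable (.of_forall (schwartz_norm_le_of_eq_zero f hf0 hf1))
  refine (tendsto_integral_levyMeasure_comp_mul hq hq0 hM hqlim hint).comp hε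
    |>.congr_dist ?_
  have hbound := (((hτ.mul_const K).add hv).const_mul K).mul_const (fourierMoment f)
  refine squeeze_zero' (.of_forall fun _ => dist_nonneg) ?_ (by simpa using hbound)
  have hεpos := hε.eventually self_mem_nhdsWithin
  have hε1 := (hε.mono_right nhdsWithin_le_nhds).eventually_le_const one_pos
  filter_upwards [self_mem_nhdsWithin, hεpos, hε1] with h hh he he1
  rw [dist_comm, dist_eq_norm]
  exact norm_integral_sub_integral_div_sub_le hY1 hY2 hCp hCm hq hM0 hM le_rfl hh he he1
    (hμ h hh) hf0 hf1

end SmallTime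

/-- The function `x ↦ x^m · 1_{|x| ≤ a}`. -/
def truncPow (m : ℕ) (a : ℝ) : ℝ → ℝ := {x | |x| ≤ a}.indicator fun x => x ^ m

section TruncPow

variable {m n : ℕ} {a b x : ℝ}

lemma truncPow_of_le (h : |x| ≤ a) : truncPow m a x = x ^ m := indicator_of_mem (by exact h) _

lemma truncPow_of_lt (h : a < |x|) : truncPow m a x = 0 := indicator_of_notMem (by simpa using h) _

lemma truncPow_nonneg (hm : Even m) (x : ℝ) : 0 ≤ truncPow m a x :=
  indicator_nonneg (fun x _ => hm.pow_nonneg x) x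

lemma measurable_truncPow : Measurable (truncPow m a) :=
  Measurable.indicator (by fun_prop) (measurableSet_le measurable_abs measurable_const)

lemma norm_truncPow_le (x : ℝ) : ‖truncPow m a x‖ ≤ |a| ^ m := by
  rcases le_or_gt |x| a with hx | hx
  · rw [truncPow_of_le hx, norm_pow, Real.norm_eq_abs]
    exact pow_le_pow_left₀ (abs_nonneg x) (hx.trans (le_abs_self a)) m
  · rw [truncPow_of_lt hx, norm_zero]
    positivity

lemma integrable_truncPow {μ : Measure ℝ} [IsFiniteMeasure μ] : Integrable (truncPow m a) μ :=
  .of_bound measurable_truncPow.aestronglyMeasurable _ (.of_forall norm_truncPow_le)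

lemma truncPow_mul_truncPow (hab : a ≤ b) (x : ℝ) :
    truncPow m a x * truncPow n b x = truncPow (m + n) a x := by
  rcases le_or_gt |x| a with hx | hx
  · rw [truncPow_of_le hx, truncPow_of_le (hx.trans hab), truncPow_of_le hx, pow_add]
  · rw [truncPow_of_lt hx, truncPow_of_lt hx, zero_mul]

lemma truncPow_mul_right {e : ℝ} (he : 0 < e) (x : ℝ) :
    truncPow m (a * e) x = e ^ m * truncPow m a (x / e) := by
  have habs : |x / e| = |x| / e := by rw [abs_div, abs_of_pos he]
  rcases le_or_gt |x| (a * e) with hx | hx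
  · rw [truncPow_of_le hx, truncPow_of_le (by rwa [habs, div_le_iff₀ he]), ← mul_pow,
      mul_div_cancel₀ _ he.ne']
  · rw [truncPow_of_lt hx, truncPow_of_lt (by rwa [habs, lt_div_iff₀ he]), mul_zero]

lemma truncPow_abs (hm : Even m) (x : ℝ) : truncPow m a |x| = truncPow m a x := by
  simp only [truncPow, indicator, mem_ofPred_eq, abs_abs, hm.pow_abs]

lemma eqOn_rpow_mul_truncPow (Y : ℝ) :
    EqOn (fun t => t ^ (-1 - Y) * truncPow m a t)
      ((Iic a).indicator fun t => t ^ (m - Y - 1)) (Ioi 0) := fun t (ht : 0 < t) => by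
  beta_reduce
  rcases le_or_gt t a with hta | hta
  · rw [truncPow_of_le (by rwa [abs_of_pos ht]), indicator_of_mem (mem_Iic.mpr hta),
      ← Real.rpow_natCast, ← Real.rpow_add ht]
    ring_nf
  · rw [truncPow_of_lt (by rwa [abs_of_pos ht]), indicator_of_notMem (by simpa using hta),
      mul_zero]

lemma integrable_truncPow_radialMeasure {Y : ℝ} (hY : Y < m) (ha : 0 ≤ a) :
    Integrable (truncPow m a) (radialMeasure Y) := by
  rw [integrable_radialMeasure_iff,
    integrableOn_congr_fun (eqOn_rpow_mul_truncPow Y) measurableSet_Ioi,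
    IntegrableOn, integrable_indicator_iff measurableSet_Iic, IntegrableOn,
    Measure.restrict_restrict measurableSet_Iic, inter_comm, Ioi_inter_Iic]
  exact (intervalIntegrable_iff_integrableOn_Ioc_of_le ha).mp
    (intervalIntegral.intervalIntegrable_rpow' (by linarith))

lemma integral_truncPow_radialMeasure {Y : ℝ} (hY : Y < m) (ha : 0 ≤ a) :
    ∫ t, truncPow m a t ∂radialMeasure Y = a ^ (m - Y) / (m - Y) := by
  rw [integral_radialMeasure, setIntegral_congr_fun measurableSet_Ioi (eqOn_rpow_mul_truncPow Y),
    setIntegral_indicator measurableSet_Iic,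
    Ioi_inter_Iic, ← intervalIntegral.integral_of_le ha,
    integral_rpow (.inl (by linarith)), sub_add_cancel, Real.zero_rpow (by linarith), sub_zero]

section LevyMeasure

variable {Y Cp Cm : ℝ}

lemma integrable_truncPow_levyMeasure_one (hCp : 0 ≤ Cp) (hCm : 0 ≤ Cm) (hm : Even m)
    (hY : Y < m) (ha : 0 ≤ a) : Integrable (truncPow m a) (levyMeasure Y Cp Cm 1) := by
  simpa only [truncPow_abs hm] using integrable_comp_abs_levyMeasure_one hCp hCm
    measurable_truncPow (integrable_truncPow_radialMeasure hY ha)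

lemma integral_truncPow_levyMeasure_one (hCp : 0 ≤ Cp) (hCm : 0 ≤ Cm) (hm : Even m)
    (hY : Y < m) (ha : 0 ≤ a) :
    ∫ x, truncPow m a x ∂levyMeasure Y Cp Cm 1 = (Cp + Cm) * (a ^ (m - Y) / (m - Y)) := by
  have h := integral_comp_abs_levyMeasure_one (Y := Y) hCp hCm
    (measurable_truncPow (m := m) (a := a))
  simpa only [truncPow_abs hm, integral_truncPow_radialMeasure hY ha] using h

lemma continuousAt_integral_truncPow_levyMeasure_one (hCp : 0 ≤ Cp) (hCm : 0 ≤ Cm) (hm : Even m)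
    (hY : Y < m) (ha : 0 < a) :
    ContinuousAt (fun r => ∫ x, truncPow m r x ∂levyMeasure Y Cp Cm 1) a := by
  have hformula : (fun r : ℝ => (Cp + Cm) * (r ^ (m - Y) / (m - Y))) =ᶠ[𝓝 a]
      fun r => ∫ x, truncPow m r x ∂levyMeasure Y Cp Cm 1 := by
    filter_upwards [lt_mem_nhds ha] with r hr
    rw [integral_truncPow_levyMeasure_one hCp hCm hm hY hr.le]
  exact (((Real.continuousAt_rpow_const a _ (.inl ha.ne')).div_const _).const_mul _).congr hformula

end LevyMeasure

section Bump

variable (χ : ContDiffBump (0 : ℝ))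

lemma truncPow_rIn_le (hm : Even m) (x : ℝ) : truncPow m χ.rIn x ≤ x ^ m * χ x := by
  rcases le_or_gt |x| χ.rIn with hx | hx
  · rw [truncPow_of_le hx, χ.one_of_mem_closedBall (by simpa using hx), mul_one]
  · rw [truncPow_of_lt hx]
    exact mul_nonneg (hm.pow_nonneg x) χ.nonneg

lemma le_truncPow_rOut (hm : Even m) (x : ℝ) : x ^ m * χ x ≤ truncPow m χ.rOut x := by
  rcases le_or_gt |x| χ.rOut with hx | hx
  · rw [truncPow_of_le hx]
    exact mul_le_of_le_one_right (hm.pow_nonneg x) χ.le_one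
  · rw [truncPow_of_lt hx, χ.zero_of_le_dist (by simpa using hx.le), mul_zero]

variable {μ : Measure ℝ}

lemma integrable_pow_mul_bump (hm : Even m) (hint : Integrable (truncPow m χ.rOut) μ) :
    Integrable (fun x => x ^ m * χ x) μ := by
  have := χ.continuous
  refine hint.mono' (by fun_prop) (.of_forall fun x => ?_)
  rw [Real.norm_of_nonneg (mul_nonneg (hm.pow_nonneg x) χ.nonneg)]
  exact le_truncPow_rOut χ hm x

lemma integral_truncPow_rIn_le (hm : Even m) (hint : Integrable (truncPow m χ.rOut) μ) :
    ∫ x, truncPow m χ.rIn x ∂μ ≤ ∫ x, x ^ m * χ x ∂μ :=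
  integral_mono_of_nonneg (.of_forall (truncPow_nonneg hm)) (integrable_pow_mul_bump χ hm hint)
    (.of_forall (truncPow_rIn_le χ hm))

lemma integral_le_integral_truncPow_rOut (hm : Even m) (hint : Integrable (truncPow m χ.rOut) μ) :
    ∫ x, x ^ m * χ x ∂μ ≤ ∫ x, truncPow m χ.rOut x ∂μ :=
  integral_mono (integrable_pow_mul_bump χ hm hint) hint (le_truncPow_rOut χ hm)

end Bump

theorem tendsto_integral_truncPow_sub_div {ι : Type*} {l : Filter ι} (hm : Even m)
    {μ : ι → Measure ℝ} [∀ i, IsFiniteMeasure (μ i)] {c τ : ι → ℝ} {ν : Measure ℝ}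
    (hτ : ∀ᶠ i in l, 0 < τ i) (hint : ∀ r, 0 < r → Integrable (truncPow m r) ν) (ha : 0 < a)
    (hcont : ContinuousAt (fun r => ∫ x, truncPow m r x ∂ν) a)
    (hbump : ∀ χ : ContDiffBump (0 : ℝ),
      Tendsto (fun i => (∫ x, x ^ m * χ x ∂μ i - c i) / τ i) l (𝓝 (∫ x, x ^ m * χ x ∂ν))) :
    Tendsto (fun i => (∫ x, truncPow m a x ∂μ i - c i) / τ i) l (𝓝 (∫ x, truncPow m a x ∂ν)) := by
  refine tendsto_order.mpr ⟨fun L hL => ?_, fun U hU => ?_⟩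
  · obtain ⟨r, ⟨hr0, hra⟩, hLr⟩ : ∃ r ∈ Ioo 0 a, L < ∫ x, truncPow m r x ∂ν :=
      (Filter.Eventually.and (Ioo_mem_nhdsLT ha)
        (hcont.eventually_const_lt hL |>.filter_mono nhdsWithin_le_nhds)).exists
    let χ : ContDiffBump (0 : ℝ) := ⟨r, a, hr0, hra⟩
    have hlim := hLr.trans_le (integral_truncPow_rIn_le χ hm (hint a ha))
    filter_upwards [(hbump χ).eventually_const_lt hlim, hτ] with i hi hτi
    have hle : ∫ x, x ^ m * χ x ∂μ i ≤ ∫ x, truncPow m a x ∂μ i :=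
      integral_le_integral_truncPow_rOut χ hm integrable_truncPow
    exact hi.trans_le (by gcongr)
  · obtain ⟨r, har, hrU⟩ : ∃ r ∈ Ioi a, ∫ x, truncPow m r x ∂ν < U :=
      (eventually_mem_nhdsWithin.and
        (hcont.eventually_lt_const hU |>.filter_mono nhdsWithin_le_nhds)).exists
    let χ : ContDiffBump (0 : ℝ) := ⟨a, r, ha, har⟩
    have hlim := (integral_le_integral_truncPow_rOut χ hm (hint r (ha.trans har))).trans_lt hrU
    filter_upwards [(hbump χ).eventually_lt_const hlim, hτ] with i hi hτi
    have hle : ∫ x, truncPow m a x ∂μ i ≤ ∫ x, x ^ m * χ x ∂μ i :=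
      integral_truncPow_rIn_le χ hm integrable_truncPow
    exact lt_of_le_of_lt (by gcongr) hi

end TruncPow

section GaussianMoments

open scoped Nat

lemma integrable_pow_gaussianReal (m : ℝ) (v : ℝ≥0) (k : ℕ) :
    Integrable (fun x => x ^ k) (gaussianReal m v) :=
  ((memLp_id_gaussianReal' (k : ℝ≥0∞) (by simp)).integrable_norm_pow' (p := k)).mono
    (by fun_prop) (.of_forall fun x => by simp)

lemma integral_pow_two_mul_gaussianReal_zero_one (n : ℕ) :
    ∫ x, x ^ (2 * n) ∂gaussianReal 0 1 = ((2 * n - 1)‼ : ℕ) := by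
  have hdensity (x : ℝ) : gaussianPDFReal 0 1 x • x ^ (2 * n)
      = (√(2 * π))⁻¹ * (|x| ^ (2 * n : ℝ) * Real.exp (-(1 / 2) * |x| ^ (2 : ℝ))) := by
    have hpow : |x| ^ (2 * n : ℝ) = x ^ (2 * n) := by
      rw [← (even_two_mul n).pow_abs x, ← Real.rpow_natCast]
      push_cast
      rfl
    rw [hpow, Real.rpow_two, sq_abs, gaussianPDFReal, smul_eq_mul, NNReal.coe_one, sub_zero,
      mul_one, mul_one, neg_div, neg_mul, one_div_mul_eq_div]
    ring
  have hscale : (1 / 2 : ℝ) ^ (-(2 * n + 1) / 2 : ℝ) = 2 ^ n * √2 := by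
    rw [one_div, Real.inv_rpow zero_le_two, ← Real.rpow_neg zero_le_two,
      show -(-(2 * (n : ℝ) + 1) / 2) = n + 1 / 2 by ring, Real.rpow_add two_pos, Real.rpow_natCast,
      ← Real.sqrt_eq_rpow]
  rw [integral_gaussianReal_eq_integral_smul one_ne_zero]
  simp_rw [hdensity]
  rw [integral_const_mul,
    integral_comp_abs (f := fun x => x ^ (2 * n : ℝ) * Real.exp (-(1 / 2) * x ^ (2 : ℝ))),
    integral_rpow_mul_exp_neg_mul_rpow two_pos (by linarith [n.cast_nonneg (α := ℝ)]) one_half_pos,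
    hscale, show (2 * n + 1 : ℝ) / 2 = n + 1 / 2 by ring, Real.Gamma_nat_add_half,
    Real.sqrt_mul zero_le_two]
  field_simp

lemma integral_pow_two_mul_gaussianReal_zero (v : ℝ≥0) (n : ℕ) :
    ∫ x, x ^ (2 * n) ∂gaussianReal 0 v = v ^ n * ((2 * n - 1)‼ : ℕ) := by
  have hscale : gaussianReal 0 v = (gaussianReal 0 1).map (√v * ·) := by
    rw [gaussianReal_map_const_mul, mul_zero, mul_one]
    congr 1
    ext
    simp
  have hsq : √(v : ℝ) ^ 2 = v := Real.sq_sqrt v.coe_nonneg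
  rw [hscale, integral_map (by fun_prop) (by fun_prop)]
  simp_rw [mul_pow, pow_mul √(v : ℝ), hsq]
  rw [integral_const_mul, integral_pow_two_mul_gaussianReal_zero_one]

lemma abs_pow_mul_bump_sub_le (χ : ContDiffBump (0 : ℝ)) (j k : ℕ) (x : ℝ) :
    |x ^ (2 * j) * χ x - x ^ (2 * j)| ≤ (χ.rIn ^ (2 * k))⁻¹ * x ^ (2 * (j + k)) := by
  have hrIn := χ.rIn_pos
  have hpos (i : ℕ) : 0 ≤ x ^ (2 * i) := (even_two_mul i).pow_nonneg x
  rcases le_or_gt |x| χ.rIn with hx | hx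
  · rw [χ.one_of_mem_closedBall (by simpa using hx), mul_one, sub_self, abs_zero]
    exact mul_nonneg (by positivity) (hpos _)
  · have hone : 1 ≤ (χ.rIn ^ (2 * k))⁻¹ * x ^ (2 * k) := by
      rw [← (even_two_mul k).pow_abs x, inv_mul_eq_div, one_le_div (by positivity)]
      gcongr
    calc |x ^ (2 * j) * χ x - x ^ (2 * j)| = x ^ (2 * j) * (1 - χ x) := by
          rw [abs_sub_comm, ← mul_one_sub, abs_of_nonneg
            (mul_nonneg (hpos j) (sub_nonneg.mpr χ.le_one))]
      _ ≤ x ^ (2 * j) * ((χ.rIn ^ (2 * k))⁻¹ * x ^ (2 * k)) :=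
          mul_le_mul_of_nonneg_left (by linarith [χ.nonneg (x := x)]) (hpos j)
      _ = _ := by rw [mul_add, pow_add]; ring

lemma abs_integral_pow_mul_bump_sub_gaussianReal_le (χ : ContDiffBump (0 : ℝ)) (j k : ℕ)
    (v : ℝ≥0) :
    |∫ x, x ^ (2 * j) * χ x ∂gaussianReal 0 v - ∫ x, x ^ (2 * j) ∂gaussianReal 0 v|
      ≤ (χ.rIn ^ (2 * k))⁻¹ * (v ^ (j + k) * ((2 * (j + k) - 1)‼ : ℕ)) := by
  rw [← integral_sub (integrable_pow_mul_bump χ (even_two_mul j) integrable_truncPow)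
    (integrable_pow_gaussianReal 0 v _), ← integral_pow_two_mul_gaussianReal_zero,
    ← integral_const_mul, ← Real.norm_eq_abs]
  exact norm_integral_le_of_norm_le ((integrable_pow_gaussianReal 0 v _).const_mul _)
    (.of_forall (abs_pow_mul_bump_sub_le χ j k))

theorem tendsto_integral_pow_mul_bump_sub_gaussianReal_div {ι : Type*} {l : Filter ι}
    {v : ι → ℝ≥0} {τ : ι → ℝ} {j k : ℕ}
    (hv : Tendsto (fun i => (v i : ℝ) ^ (j + k) / τ i) l (𝓝 0)) (χ : ContDiffBump (0 : ℝ)) :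
    Tendsto (fun i => (∫ x, x ^ (2 * j) * χ x ∂gaussianReal 0 (v i)
      - ∫ x, x ^ (2 * j) ∂gaussianReal 0 (v i)) / τ i) l (𝓝 0) := by
  have hbound := (hv.norm.const_mul (χ.rIn ^ (2 * k))⁻¹).mul_const (((2 * (j + k) - 1)‼ : ℕ) : ℝ)
  rw [norm_zero, mul_zero, zero_mul] at hbound
  refine squeeze_zero_norm (fun i => ?_) hbound
  rw [norm_div, norm_div, Real.norm_of_nonneg (pow_nonneg (v i).coe_nonneg _), Real.norm_eq_abs,
    mul_div_assoc', div_mul_eq_mul_div, mul_assoc]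
  gcongr
  exact abs_integral_pow_mul_bump_sub_gaussianReal_le χ j k (v i)

end GaussianMoments

section Increment

variable {b Y Cp Cm : ℝ} {q : ℝ → ℝ}

/-- The function `x ↦ x^m χ(x)`, a Schwartz approximation of `truncPow m`. -/
def bumpPow (m : ℕ) (χ : ContDiffBump (0 : ℝ)) : 𝓢(ℝ, ℂ) :=
  HasCompactSupport.toSchwartzMap (f := fun x => ((x ^ m * χ x : ℝ) : ℂ))
    (χ.hasCompactSupport.mul_left.comp_left Complex.ofReal_zero)
    (Complex.ofRealCLM.contDiff.comp ((contDiff_id.pow m).mul χ.contDiff))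

lemma bumpPow_apply (m : ℕ) (χ : ContDiffBump (0 : ℝ)) (x : ℝ) :
    bumpPow m χ x = ((x ^ m * χ x : ℝ) : ℂ) := rfl

lemma deriv_bumpPow_zero {m : ℕ} (hm : 2 ≤ m) (χ : ContDiffBump (0 : ℝ)) :
    deriv (bumpPow m χ) 0 = 0 := by
  have hχ : HasDerivAt χ (deriv χ 0) 0 :=
    ((χ.contDiff (n := 1)).differentiable one_ne_zero 0).hasDerivAt
  have hderiv := ((hasDerivAt_pow m (0 : ℝ)).mul hχ).ofReal_comp.deriv
  rw [zero_pow (by omega), zero_pow (by omega), mul_zero, zero_mul, zero_mul, add_zero,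
    Complex.ofReal_zero] at hderiv
  exact hderiv

lemma tendsto_integral_pow_mul_bump_sub_div (hY1 : 1 < Y) (hY2 : Y < 2) (hCp : 0 ≤ Cp)
    (hCm : 0 ≤ Cm) (hq : Measurable q) (hq0 : ∀ x, 0 ≤ q x) {M : ℝ} (hM : ∀ x, q x ≤ M)
    (hqlim : Tendsto q (𝓝[≠] 0) (𝓝 1)) {ε : ℝ → ℝ} (hε : Tendsto ε (𝓝[>] 0) (𝓝[>] 0))
    (hτ : Tendsto (fun h => h * ε h ^ (-Y)) (𝓝[>] 0) (𝓝 0)) {μ : ℝ → Measure ℝ}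
    [∀ h, IsProbabilityMeasure (μ h)] {v : ℝ → ℝ≥0}
    (hv : Tendsto (fun h => (v h : ℝ)) (𝓝[>] 0) (𝓝 0))
    (hμ : ∀ h, 0 < h → ∀ u, charFun (μ h) u
      = charFun (gaussianReal 0 (v h)) u * Complex.exp (h * psiJ b Y Cp Cm q (u / ε h)))
    {m : ℕ} (hm : 2 ≤ m) (χ : ContDiffBump (0 : ℝ)) :
    Tendsto (fun h => (∫ x, x ^ m * χ x ∂μ h - ∫ x, x ^ m * χ x ∂gaussianReal 0 (v h))
        / (h * ε h ^ (-Y))) (𝓝[>] 0) (𝓝 (∫ x, x ^ m * χ x ∂levyMeasure Y Cp Cm 1)) := by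
  have hzero : bumpPow m χ 0 = 0 := by
    rw [bumpPow_apply, zero_pow (by omega), zero_mul, Complex.ofReal_zero]
  have hlim := tendsto_integral_sub_integral_div hY1 hY2 hCp hCm hq hq0 hM hqlim hε hτ hv hμ
    hzero (deriv_bumpPow_zero hm χ)
  simp_rw [bumpPow_apply, integral_complex_ofReal] at hlim
  exact Filter.tendsto_ofReal_iff.mp (by exact_mod_cast hlim)

theorem tendsto_integral_truncPow_sub_div_of_charFun (hY1 : 1 < Y) (hY2 : Y < 2) (hCp : 0 ≤ Cp)
    (hCm : 0 ≤ Cm) (hq : Measurable q) (hq0 : ∀ x, 0 ≤ q x) {M : ℝ} (hM : ∀ x, q x ≤ M)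
    (hqlim : Tendsto q (𝓝[≠] 0) (𝓝 1)) {ε : ℝ → ℝ} (hε : Tendsto ε (𝓝[>] 0) (𝓝[>] 0))
    (hτ : Tendsto (fun h => h * ε h ^ (-Y)) (𝓝[>] 0) (𝓝 0)) {μ : ℝ → Measure ℝ}
    [∀ h, IsProbabilityMeasure (μ h)] {v : ℝ → ℝ≥0}
    (hv : Tendsto (fun h => (v h : ℝ)) (𝓝[>] 0) (𝓝 0)) {n : ℕ}
    (hvτ : Tendsto (fun h => (v h : ℝ) ^ n / (h * ε h ^ (-Y))) (𝓝[>] 0) (𝓝 0))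
    (hμ : ∀ h, 0 < h → ∀ u, charFun (μ h) u
      = charFun (gaussianReal 0 (v h)) u * Complex.exp (h * psiJ b Y Cp Cm q (u / ε h)))
    {j : ℕ} (hj : 1 ≤ j) {a : ℝ} (ha : 0 < a) :
    Tendsto (fun h => (∫ x, truncPow (2 * j) a x ∂μ h - ∫ x, x ^ (2 * j) ∂gaussianReal 0 (v h))
        / (h * ε h ^ (-Y))) (𝓝[>] 0)
      (𝓝 ((Cp + Cm) * (a ^ ((2 * j : ℕ) - Y) / ((2 * j : ℕ) - Y)))) := by
  have hYj : Y < (2 * j : ℕ) := hY2.trans_le (by exact_mod_cast (by omega : 2 ≤ 2 * j))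
  have hτpos : ∀ᶠ h in 𝓝[>] (0 : ℝ), 0 < h * ε h ^ (-Y) := by
    filter_upwards [self_mem_nhdsWithin, hε.eventually self_mem_nhdsWithin] with h hh hεh
    exact mul_pos hh (Real.rpow_pos_of_pos hεh _)
  have htail : Tendsto (fun h => (v h : ℝ) ^ (j + n) / (h * ε h ^ (-Y))) (𝓝[>] 0) (𝓝 0) := by
    simpa [pow_add, mul_div_assoc] using (hv.pow j).mul hvτ
  rw [← integral_truncPow_levyMeasure_one hCp hCm (even_two_mul j) hYj ha.le]
  refine tendsto_integral_truncPow_sub_div (even_two_mul j) hτpos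
    (fun r hr => integrable_truncPow_levyMeasure_one hCp hCm (even_two_mul j) hYj hr.le) ha
    (continuousAt_integral_truncPow_levyMeasure_one hCp hCm (even_two_mul j) hYj ha) fun χ => ?_
  have hjump := tendsto_integral_pow_mul_bump_sub_div hY1 hY2 hCp hCm hq hq0 hM hqlim hε hτ hv hμ
    (by omega : 2 ≤ 2 * j) χ
  have hgauss := tendsto_integral_pow_mul_bump_sub_gaussianReal_div htail χ
  simpa only [← add_div, sub_add_sub_cancel, add_zero] using hjump.add hgauss

end Increment

section Threshold

variable {ε : ℝ → ℝ} {r : ℝ}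

lemma tendsto_pow_mul_rpow_zero (hε : Tendsto ε (𝓝[>] 0) (𝓝[>] 0))
    (hεr : (fun h => h) =O[𝓝[>] 0] fun h => ε h ^ r) (k : ℕ) {s : ℝ} (hs : 0 < r * k + s) :
    Tendsto (fun h => h ^ k * ε h ^ s) (𝓝[>] 0) (𝓝 0) := by
  have hpow : Tendsto (fun h => ε h ^ (r * k + s)) (𝓝[>] 0) (𝓝 0) := by
    simpa [Real.zero_rpow hs.ne'] using
      (hε.mono_right nhdsWithin_le_nhds).rpow_const (.inr hs.le)
  refine (((hεr.pow k).mul (isBigO_refl (fun h => ε h ^ s) _)).trans_eventuallyEq ?_).trans_tendsto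
    hpow
  filter_upwards [hε.eventually self_mem_nhdsWithin] with h hεh
  rw [Real.rpow_add hεh, Real.rpow_mul_natCast (le_of_lt hεh)]

lemma sq_mul_sqrt_div {h e : ℝ} (hh : 0 ≤ h) (σ : ℝ) : (σ * √h / e) ^ 2 = σ ^ 2 * (h / e ^ 2) := by
  rw [div_pow, mul_pow, Real.sq_sqrt hh, mul_div_assoc]

lemma tendsto_sq_mul_sqrt_div_zero (hε : Tendsto ε (𝓝[>] 0) (𝓝[>] 0))
    (hεr : (fun h => h) =O[𝓝[>] 0] fun h => ε h ^ r) (hr : 2 < r) (σ : ℝ) :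
    Tendsto (fun h => (σ * √h / ε h) ^ 2) (𝓝[>] 0) (𝓝 0) := by
  have hlim := (tendsto_pow_mul_rpow_zero hε hεr 1 (s := -(2 : ℕ))
    (by push_cast; linarith)).const_mul (σ ^ 2)
  rw [mul_zero] at hlim
  refine hlim.congr' ?_
  filter_upwards [self_mem_nhdsWithin, hε.eventually self_mem_nhdsWithin] with h hh hεh
  rw [sq_mul_sqrt_div (le_of_lt hh), pow_one, Real.rpow_neg (le_of_lt hεh), Real.rpow_natCast,
    div_eq_mul_inv]

lemma exists_tendsto_sq_mul_sqrt_div_pow_div_zero (hε : Tendsto ε (𝓝[>] 0) (𝓝[>] 0))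
    (hεr : (fun h => h) =O[𝓝[>] 0] fun h => ε h ^ r) (hr : 2 < r) (Y σ : ℝ) :
    ∃ n : ℕ, Tendsto (fun h => ((σ * √h / ε h) ^ 2) ^ n / (h * ε h ^ (-Y))) (𝓝[>] 0) (𝓝 0) := by
  obtain ⟨k, hk⟩ := exists_nat_gt ((2 - Y) / (r - 2))
  rw [div_lt_iff₀ (by linarith)] at hk
  have hlim := (tendsto_pow_mul_rpow_zero hε hεr k (s := Y - (2 * (k + 1) : ℕ))
    (by push_cast; linarith)).const_mul ((σ ^ 2) ^ (k + 1))
  rw [mul_zero] at hlim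
  refine ⟨k + 1, hlim.congr' ?_⟩
  filter_upwards [self_mem_nhdsWithin, hε.eventually self_mem_nhdsWithin]
    with h (hh : 0 < h) (hεh : 0 < ε h)
  have hεY : ε h ^ Y ≠ 0 := (Real.rpow_pos_of_pos hεh Y).ne'
  rw [sq_mul_sqrt_div hh.le, Real.rpow_sub hεh, Real.rpow_natCast, Real.rpow_neg hεh.le, mul_pow,
    div_pow, pow_mul, pow_succ h]
  field_simp [hεY]

lemma tendsto_nhdsGT_zero_of_tendsto_mul_rpow_neg (hεpos : ∀ h, 0 < h → 0 < ε h) {s : ℝ}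
    (hs : 0 < s) (hε : Tendsto (fun h => ε h * h ^ (-s)) (𝓝[>] 0) (𝓝 0)) :
    Tendsto ε (𝓝[>] 0) (𝓝[>] 0) := by
  have hpos : ∀ᶠ h : ℝ in 𝓝[>] 0, 0 < h := self_mem_nhdsWithin
  refine tendsto_nhdsWithin_iff.mpr ⟨?_, hpos.mono hεpos⟩
  have hpow : Tendsto (fun h : ℝ => h ^ s) (𝓝[>] 0) (𝓝 0) := by
    simpa [Real.zero_rpow hs.ne'] using (tendsto_id.mono_left
      (nhdsWithin_le_nhds (a := (0 : ℝ)))).rpow_const (.inr hs.le)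
  refine (zero_mul (0 : ℝ) ▸ hε.mul hpow).congr' ?_
  filter_upwards [hpos] with h hh
  rw [mul_assoc, ← Real.rpow_add hh, neg_add_cancel, Real.rpow_zero, mul_one]

lemma isBigO_rpow_inv_of_tendsto_mul_rpow_neg_atTop {s : ℝ} (hs : 0 < s)
    (hε : Tendsto (fun h => ε h * h ^ (-s)) (𝓝[>] 0) atTop) :
    (fun h => h) =O[𝓝[>] 0] fun h => ε h ^ s⁻¹ := by
  refine .of_bound 1 ?_
  filter_upwards [self_mem_nhdsWithin, hε.eventually_ge_atTop 1] with h (hh : 0 < h) hle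
  have hpow : h ^ s ≤ ε h := by
    rwa [Real.rpow_neg hh.le, ← div_eq_mul_inv, one_le_div (by positivity)] at hle
  have hinv := Real.rpow_le_rpow (by positivity) hpow (inv_nonneg.mpr hs.le)
  rw [Real.rpow_rpow_inv hh.le hs.ne'] at hinv
  rw [one_mul, Real.norm_of_nonneg hh.le]
  exact hinv.trans (le_abs_self _)

end Threshold

section Covariance

lemma tendsto_sub_mul_sub_two_mul_sq_div {ι : Type*} {l : Filter ι} {A B B' v τ : ι → ℝ}
    {α β β' : ℝ} (hv : Tendsto v l (𝓝 0)) (hτ : Tendsto τ l (𝓝 0))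
    (hA : Tendsto (fun i => (A i - 3 * v i ^ 2) / τ i) l (𝓝 α))
    (hB : Tendsto (fun i => (B i - v i) / τ i) l (𝓝 β))
    (hB' : Tendsto (fun i => (B' i - v i) / τ i) l (𝓝 β')) :
    Tendsto (fun i => (A i - B i * B' i - 2 * v i ^ 2) / τ i) l (𝓝 α) := by
  have hlim := ((hA.sub ((hB.mul hB').mul hτ)).sub (hv.mul hB)).sub (hv.mul hB')
  simp only [mul_zero, zero_mul, sub_zero] at hlim
  refine hlim.congr fun i => ?_
  by_cases hi : τ i = 0
  · simp [hi]
  · field_simp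
    ring

theorem tendsto_integral_truncPow_sub_mul_sub_div_of_charFun {b Y Cp Cm : ℝ} {q : ℝ → ℝ}
    (hY1 : 1 < Y) (hY2 : Y < 2) (hCp : 0 ≤ Cp) (hCm : 0 ≤ Cm) (hq : Measurable q)
    (hq0 : ∀ x, 0 ≤ q x) {M : ℝ} (hM : ∀ x, q x ≤ M) (hqlim : Tendsto q (𝓝[≠] 0) (𝓝 1))
    {ε : ℝ → ℝ} (hε : Tendsto ε (𝓝[>] 0) (𝓝[>] 0))
    (hτ : Tendsto (fun h => h * ε h ^ (-Y)) (𝓝[>] 0) (𝓝 0)) {μ : ℝ → Measure ℝ}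
    [∀ h, IsProbabilityMeasure (μ h)] {v : ℝ → ℝ≥0}
    (hv : Tendsto (fun h => (v h : ℝ)) (𝓝[>] 0) (𝓝 0)) {n : ℕ}
    (hvτ : Tendsto (fun h => (v h : ℝ) ^ n / (h * ε h ^ (-Y))) (𝓝[>] 0) (𝓝 0))
    (hμ : ∀ h, 0 < h → ∀ u, charFun (μ h) u
      = charFun (gaussianReal 0 (v h)) u * Complex.exp (h * psiJ b Y Cp Cm q (u / ε h)))
    {ζ : ℝ} (hζ : 0 < ζ) :
    Tendsto (fun h => (∫ x, truncPow 4 1 x ∂μ h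
        - (∫ x, truncPow 2 1 x ∂μ h) * (∫ x, truncPow 2 ζ x ∂μ h) - 2 * (v h : ℝ) ^ 2)
        / (h * ε h ^ (-Y))) (𝓝[>] 0) (𝓝 ((Cp + Cm) / (4 - Y))) := by
  have hmoment {j : ℕ} (hj : 1 ≤ j) {a : ℝ} (ha : 0 < a) :=
    tendsto_integral_truncPow_sub_div_of_charFun hY1 hY2 hCp hCm hq hq0 hM hqlim hε hτ hv hvτ hμ
      hj ha
  have hsecond (w : ℝ≥0) : ∫ x, x ^ 2 ∂gaussianReal 0 w = w := by
    simpa using integral_pow_two_mul_gaussianReal_zero w 1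
  have hfourth (w : ℝ≥0) : ∫ x, x ^ 4 ∂gaussianReal 0 w = 3 * (w : ℝ) ^ 2 := by
    simpa [Nat.doubleFactorial, mul_comm] using integral_pow_two_mul_gaussianReal_zero w 2
  have hA := hmoment one_le_two one_pos
  have hB {a : ℝ} (ha : 0 < a) := hmoment le_rfl ha
  simp only [Nat.reduceMul, hfourth, Real.one_rpow, mul_one_div, Nat.cast_ofNat] at hA
  simp only [Nat.reduceMul, hsecond] at hB
  exact tendsto_sub_mul_sub_two_mul_sq_div hv hτ hA (hB one_pos) (hB hζ)

variable {Ω : Type*} [MeasurableSpace Ω] {P : Measure Ω} {X : Ω → ℝ}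

lemma integral_truncPow_mul_comp (hX : Measurable X) {e : ℝ} (he : 0 < e) (m : ℕ) (a : ℝ) :
    ∫ ω, truncPow m (a * e) (X ω) ∂P
      = e ^ m * ∫ x, truncPow m a x ∂P.map fun ω => X ω / e := by
  simp_rw [integral_map (hX.div_const e).aemeasurable measurable_truncPow.aestronglyMeasurable,
    truncPow_mul_right he, integral_const_mul]

lemma integral_truncPow_mul_sub_mul_comp (hX : Measurable X) {e ζ : ℝ} (he : 0 < e) (hζ : 1 ≤ ζ)
    (m : ℕ) :
    ∫ ω, truncPow m e (X ω) * truncPow m (ζ * e) (X ω) ∂P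
        - (∫ ω, truncPow m e (X ω) ∂P) * ∫ ω, truncPow m (ζ * e) (X ω) ∂P
      = e ^ (m + m) * (∫ x, truncPow (m + m) 1 x ∂P.map (fun ω => X ω / e)
        - (∫ x, truncPow m 1 x ∂P.map fun ω => X ω / e)
          * ∫ x, truncPow m ζ x ∂P.map fun ω => X ω / e) := by
  have hone (k : ℕ) := integral_truncPow_mul_comp (P := P) hX he k 1
  rw [one_mul] at hone
  simp_rw [truncPow_mul_truncPow (le_mul_of_one_le_left he.le hζ), hone,
    integral_truncPow_mul_comp hX he]
  ring

theorem covariance_truncated_square_general [IsProbabilityMeasure P] {Y Cp Cm b : ℝ} (σ : ℝ)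
    {q : ℝ → ℝ} (hY1 : 1 < Y) (hY2 : Y < 2) (hCp : 0 ≤ Cp) (hCm : 0 ≤ Cm)
    (hq_meas : Measurable q) (hq_nonneg : ∀ x, 0 ≤ q x) (hq_bdd : ∃ M : ℝ, ∀ x, q x ≤ M)
    (hq_lim : Tendsto q (𝓝[≠] 0) (𝓝 1)) {J : ℝ → Ω → ℝ} {W : Ω → ℝ} (hWmeas : Measurable W)
    (hW : P.map W = gaussianReal 0 1) (hJmeas : ∀ h, Measurable (J h))
    (hJcf : ∀ h : ℝ, 0 < h → ∀ u : ℝ,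
      ∫ ω, Complex.exp (Complex.I * u * J h ω) ∂P = Complex.exp (h * psiJ b Y Cp Cm q u))
    (hindep : ∀ h, 0 < h → IndepFun W (J h) P) {ζ : ℝ} (hζ : 1 ≤ ζ) {ε : ℝ → ℝ}
    (hε : Tendsto ε (𝓝[>] 0) (𝓝[>] 0)) {r : ℝ} (hr : 2 < r)
    (hεr : (fun h => h) =O[𝓝[>] 0] fun h => ε h ^ r) :
    (fun h => ∫ ω, truncPow 2 (ε h) (σ * √h * W ω + J h ω)
            * truncPow 2 (ζ * ε h) (σ * √h * W ω + J h ω) ∂P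
          - (∫ ω, truncPow 2 (ε h) (σ * √h * W ω + J h ω) ∂P)
            * ∫ ω, truncPow 2 (ζ * ε h) (σ * √h * W ω + J h ω) ∂P
        - (2 * σ ^ 4 * h ^ 2 + (Cp + Cm) / (4 - Y) * h * ε h ^ (4 - Y)))
      =o[𝓝[>] 0] fun h => h * ε h ^ (4 - Y) := by
  obtain ⟨M, hM⟩ := hq_bdd
  have hX (h : ℝ) : Measurable fun ω => σ * √h * W ω + J h ω := by fun_prop
  have hprob (h : ℝ) : IsProbabilityMeasure (P.map fun ω => (σ * √h * W ω + J h ω) / ε h) :=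
    Measure.isProbabilityMeasure_map ((hX h).div_const _).aemeasurable
  obtain ⟨n, hvτ⟩ := exists_tendsto_sq_mul_sqrt_div_pow_div_zero hε hεr hr Y σ
  have hv := tendsto_sq_mul_sqrt_div_zero hε hεr hr σ
  have hτ := tendsto_pow_mul_rpow_zero hε hεr 1 (s := -Y) (by push_cast; linarith)
  have hlim := tendsto_integral_truncPow_sub_mul_sub_div_of_charFun hY1 hY2 hCp hCm hq_meas
    hq_nonneg hM hq_lim hε (by simpa only [pow_one] using hτ)
    (v := fun h => ((σ * √h / ε h) ^ 2).toNNReal)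
    (by simpa only [Real.coe_toNNReal _ (sq_nonneg _)] using hv)
    (by simpa only [Real.coe_toNNReal _ (sq_nonneg _)] using hvτ)
    (fun h hh => charFun_map_mul_add_div hWmeas (hJmeas h) hW (hindep h hh) (hJcf h hh) _ (ε h))
    (one_pos.trans_le hζ)
  have hpos : ∀ᶠ h in 𝓝[>] (0 : ℝ), 0 < h ∧ 0 < ε h :=
    eventually_mem_nhdsWithin.and (hε.eventually self_mem_nhdsWithin)
  rw [isLittleO_iff_tendsto' (hpos.mono fun h ⟨hh, hεh⟩ hzero =>
    absurd hzero (mul_pos hh (Real.rpow_pos_of_pos hεh _)).ne')]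
  refine (sub_self ((Cp + Cm) / (4 - Y)) ▸ hlim.sub_const _).congr' ?_
  filter_upwards [hpos] with h ⟨hh, hεh⟩
  have hεY : ε h ^ Y ≠ 0 := (Real.rpow_pos_of_pos hεh Y).ne'
  rw [integral_truncPow_mul_sub_mul_comp (hX h) hεh hζ, Real.coe_toNNReal _ (sq_nonneg _),
    sq_mul_sqrt_div hh.le, Real.rpow_neg hεh.le, Real.rpow_sub hεh, Real.rpow_ofNat]
  field_simp [hεY]
  ring

end Covariance

/-- asymptotics of the covariance of truncated squared increments at two
truncation levels `ε` and `ζε`: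
`Cov(X_h² 1_{|X_h|≤ε}, X_h² 1_{|X_h|≤ζε}) = 2σ⁴h² + ((C₊+C₋)/(4−Y)) h ε^{4−Y} + o(h ε^{4−Y})`. -/
theorem covariance_truncated_square
    {Ω : Type*} [MeasurableSpace Ω] (P : Measure Ω) [IsProbabilityMeasure P]
    (Y Cp Cm σ b : ℝ) (q : ℝ → ℝ)
    (hY1 : 1 < Y) (hY2 : Y < 2)
    (hCp : 0 < Cp) (hCm : 0 < Cm) (hσ : 0 < σ)
    (hq_meas : Measurable q) (hq_nonneg : ∀ x, 0 ≤ q x)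
    (hq_bdd : ∃ M : ℝ, ∀ x, q x ≤ M)
    (hq_lim : Tendsto q (𝓝[≠] (0 : ℝ)) (𝓝 1))
    (hq_taylor : ∃ αp αm : ℝ, αp ≠ 0 ∧ αm ≠ 0 ∧
      IntegrableOn (fun x => |q x - 1 - αp * x| * x ^ (-Y - 1)) (Set.Ioc (0 : ℝ) 1) ∧
      IntegrableOn (fun x => |q x - 1 - αm * x| * |x| ^ (-Y - 1)) (Set.Ico (-1 : ℝ) 0))
    (hq_log : ∃ K M : ℝ, ∀ x : ℝ, M ≤ |x| → |Real.log (q x)| ≤ K * |x|)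
    (hq_inf : ∀ ε : ℝ, 0 < ε → ∃ c : ℝ, 0 < c ∧ ∀ x : ℝ, x ≠ 0 → |x| < ε → c ≤ q x)
    (hq_sq : IntegrableOn (fun x => q x ^ 2 * |x| ^ (-1 - Y)) {x : ℝ | 1 < |x|})
    -- the jump part `J` and the Brownian part `W`
    (J : ℝ → Ω → ℝ) (W : Ω → ℝ)
    (hWmeas : Measurable W) (hW : P.map W = gaussianReal 0 1)
    (hJmeas : ∀ h : ℝ, Measurable (J h))
    (hJcf : ∀ h : ℝ, 0 < h → ∀ u : ℝ,
      ∫ ω, Complex.exp (Complex.I * u * J h ω) ∂P = Complex.exp (h * psiJ b Y Cp Cm q u))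
    (hindep : ∀ h : ℝ, 0 < h → IndepFun W (J h) P)
    (hY85 : Y < 8 / 5) (ζ : ℝ) (hζ : 1 < ζ)
    -- the threshold `ε = ε(h)`
    (ε : ℝ → ℝ) (hεpos : ∀ h : ℝ, 0 < h → 0 < ε h)
    (hε_lo : Tendsto (fun h => ε h * h ^ (-(4 : ℝ) / (8 + Y))) (𝓝[>] (0 : ℝ)) atTop)
    (hε_hi : Tendsto (fun h => ε h * h ^ (-(1 : ℝ) / (4 - Y))) (𝓝[>] (0 : ℝ)) (𝓝 0)) :
    (fun h : ℝ =>
        ((∫ ω, (Set.indicator {x : ℝ | |x| ≤ ε h} (fun x => x ^ 2)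
              (σ * Real.sqrt h * W ω + J h ω)) *
            (Set.indicator {x : ℝ | |x| ≤ ζ * ε h} (fun x => x ^ 2)
              (σ * Real.sqrt h * W ω + J h ω)) ∂P)
          - (∫ ω, Set.indicator {x : ℝ | |x| ≤ ε h} (fun x => x ^ 2)
              (σ * Real.sqrt h * W ω + J h ω) ∂P) *
            (∫ ω, Set.indicator {x : ℝ | |x| ≤ ζ * ε h} (fun x => x ^ 2)
              (σ * Real.sqrt h * W ω + J h ω) ∂P))
        - (2 * σ ^ 4 * h ^ 2 + (Cp + Cm) / (4 - Y) * h * ε h ^ (4 - Y)))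
      =o[𝓝[>] (0 : ℝ)] (fun h => h * ε h ^ (4 - Y)) :=
  covariance_truncated_square_general σ hY1 hY2 hCp.le hCm.le hq_meas hq_nonneg hq_bdd hq_lim
    hWmeas hW hJmeas hJcf hindep hζ.le
    (tendsto_nhdsGT_zero_of_tendsto_mul_rpow_neg hεpos (s := 1 / (4 - Y))
      (one_div_pos.mpr (by linarith)) (by simpa only [neg_div] using hε_hi))
    (r := (4 / (8 + Y))⁻¹) (by rw [inv_div]; linarith)
    (isBigO_rpow_inv_of_tendsto_mul_rpow_neg_atTop (by positivity)
      (by simpa only [neg_div] using hε_lo))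

end
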